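/- arXiv:2503.01247 — 3 statements merged into one kernel-verified Lean document; each statement's English description precedes it below -/
import Mathlib

section
/- For all σ-structures A and B and every k ∈ ℕ, there exists a positive bisimulation from F_k^I(A) to F_k^I(B) in EM(E_k^I) if, and only if, Duplicator has a winning strategy in the positive k-round Ehrenfeucht–Fraïssé game from A to B. -/
/-- A relational vocabulary: a type of relation symbols together with their arities. -/
structure Vocab : Type 1 where
  Rel : Type
  ar : Rel → ℕ

/-- A structure for the relational vocabulary `V` with carrier `α`. -/
structure Str (V : Vocab) (α : Type) : Type where
  rel : ∀ r : V.Rel, (Fin (V.ar r) → α) → Prop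
/-- The relation formed by a list of pairs of chosen elements is a partial homomorphism
from `A` to `B`: it is functional and the corresponding map preserves the
interpretations of all relation symbols. -/
def IsPartialHom {V : Vocab} {α β : Type} (A : Str V α) (B : Str V β)
    (h : List (α × β)) : Prop :=
  (∀ i j : Fin h.length, (h.get i).1 = (h.get j).1 → (h.get i).2 = (h.get j).2) ∧
  (∀ (r : V.Rel) (v : Fin (V.ar r) → Fin h.length),
    A.rel r (fun t => (h.get (v t)).1) → B.rel r fun t => (h.get (v t)).2)

/-- `PEFWin A B n h` : Duplicator has a winning strategy in the remaining `n` rounds of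
the positive Ehrenfeucht–Fraïssé game from `A` to `B`, where `h` records the pairs of
elements chosen so far.  In each round Spoiler chooses an element of either structure
and Duplicator responds with an element of the other structure; at the end the chosen
pairs must form a partial homomorphism from `A` to `B`. -/
def PEFWin {V : Vocab} {α β : Type} (A : Str V α) (B : Str V β) :
    ℕ → List (α × β) → Prop
  | 0, h => IsPartialHom A B h
  | n + 1, h => (∀ a : α, ∃ b : β, PEFWin A B n (h ++ [(a, b)])) ∧
      (∀ b : β, ∃ a : α, PEFWin A B n (h ++ [(a, b)]))
/-- An object datum for the Eilenberg–Moore category `EM(E_k^I)` of the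
Ehrenfeucht–Fraïssé comonad over `σ^I = σ ∪ {I}`: a `σ`-structure together with an
interpretation `ieq` of the fresh binary relation symbol `I` and a (forest) order. -/
structure EObj (V : Vocab) : Type 1 where
  carrier : Type
  rel : ∀ r : V.Rel, (Fin (V.ar r) → carrier) → Prop
  ieq : carrier → carrier → Prop
  le : carrier → carrier → Prop

namespace EObj

variable {V : Vocab}

/-- Gaifman adjacency, with respect to all relations of `σ ∪ {I}`. -/
def Adj (X : EObj V) (x y : X.carrier) : Prop :=
  x ≠ y ∧ ((∃ r v, X.rel r v ∧ (∃ i, v i = x) ∧ (∃ j, v j = y)) ∨ X.ieq x y ∨ X.ieq y x)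

/-- The covering relation of the order of `X`. -/
def Cover (X : EObj V) (x y : X.carrier) : Prop :=
  X.le x y ∧ x ≠ y ∧ ∀ z, X.le x z → X.le z y → z = x ∨ z = y

/-- Roots, i.e. minimal elements of the forest order. -/
def IsRoot (X : EObj V) (x : X.carrier) : Prop := ∀ y, X.le y x → y = x

/-- `X` is (the datum of) a coalgebra for `E_k^I`: a forest-ordered `σ^I`-structure of
height at most `k` in which Gaifman-adjacent elements are comparable. -/
def IsCoalg (k : ℕ) (X : EObj V) : Prop :=
  (∀ x, X.le x x) ∧ (∀ x y z, X.le x y → X.le y z → X.le x z) ∧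
  (∀ x y, X.le x y → X.le y x → x = y) ∧
  (∀ x : X.carrier, {y | X.le y x}.Finite ∧ {y | X.le y x}.ncard ≤ k + 1 ∧
    ∀ y z, X.le y x → X.le z x → X.le y z ∨ X.le z y) ∧
  (∀ x y, X.Adj x y → X.le x y ∨ X.le y x)

/-- Morphisms of `EM(E_k^I)`: homomorphisms of `σ^I`-structures that are also forest
morphisms (they send roots to roots and preserve the covering relation). -/
def IsHom (X Y : EObj V) (f : X.carrier → Y.carrier) : Prop :=
  (∀ r v, X.rel r v → Y.rel r fun i => f (v i)) ∧
  (∀ x y, X.ieq x y → Y.ieq (f x) (f y)) ∧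
  (∀ x, X.IsRoot x → Y.IsRoot (f x)) ∧
  (∀ x y, X.Cover x y → Y.Cover (f x) (f y))

/-- Embeddings: morphisms that are injective and reflect all relations. -/
def IsEmb (X Y : EObj V) (f : X.carrier → Y.carrier) : Prop :=
  IsHom X Y f ∧ Function.Injective f ∧
  (∀ r v, (Y.rel r fun i => f (v i)) → X.rel r v) ∧
  (∀ x y, Y.ieq (f x) (f y) → X.ieq x y)

/-- Paths: objects whose forest order is finite and linear. -/
def IsPath (X : EObj V) : Prop :=
  Finite X.carrier ∧ ∀ x y : X.carrier, X.le x y ∨ X.le y x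

/-- Pathwise embeddings: morphisms `f : X → Y` such that for every path embedding
`m : P ↪ X` the composite `f ∘ m` is a path embedding. -/
def IsPWEmb (k : ℕ) (X Y : EObj V) (f : X.carrier → Y.carrier) : Prop :=
  IsHom X Y f ∧ ∀ P : EObj V, IsCoalg k P → IsPath P →
    ∀ m : P.carrier → X.carrier, IsEmb P X m → IsEmb P Y fun p => f (m p)

/-- Open morphisms: every commutative square of path embeddings over `f` admits a
diagonal filler. -/
def IsOpen (k : ℕ) (X Y : EObj V) (f : X.carrier → Y.carrier) : Prop :=
  ∀ P Q : EObj V, IsCoalg k P → IsPath P → IsCoalg k Q → IsPath Q →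
    ∀ (i : P.carrier → Q.carrier) (m : P.carrier → X.carrier)
      (n : Q.carrier → Y.carrier),
      IsEmb P Q i → IsEmb P X m → IsEmb Q Y n → (∀ x, n (i x) = f (m x)) →
      ∃ d : Q.carrier → X.carrier, IsHom Q X d ∧ (∀ x, d (i x) = m x) ∧ ∀ q, f (d q) = n q

end EObj
/-- The co-free coalgebra `F_k^I(A) = (E_k J(A), ⊑)` on `J(A)`: non-empty sequences of
elements of `A` of length at most `k`, ordered by the prefix order.  A tuple of sequences
is related iff the sequences are pairwise comparable and their last elements are related
in `J(A)`; the fresh relation `I` is interpreted as comparability plus equality of last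
elements (the diagonal of `J`). -/
def FE (V : Vocab) (k : ℕ) {α : Type} (A : Str V α) : EObj V where
  carrier := {l : List α // l ≠ [] ∧ l.length ≤ k}
  rel r v :=
    (∀ i j, (v i).1 <+: (v j).1 ∨ (v j).1 <+: (v i).1) ∧
    A.rel r fun i => (v i).1.getLast (v i).2.1
  ieq s t := ((s.1 <+: t.1) ∨ (t.1 <+: s.1)) ∧ s.1.getLast s.2.1 = t.1.getLast t.2.1
  le s t := s.1 <+: t.1
/-- A positive bisimulation from `X` to `Y` in `EM(E_k^I)`: a diagram
`X ⟵p Z₁ ⟶h Z₂ ⟶q Y` in which `p` and `q` are open pathwise embeddings and `h` is a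
bijective morphism. -/
def PosBisimE (V : Vocab) (k : ℕ) (X Y : EObj V) : Prop :=
  ∃ Z₁ Z₂ : EObj V, EObj.IsCoalg k Z₁ ∧ EObj.IsCoalg k Z₂ ∧
    ∃ (p : Z₁.carrier → X.carrier) (h : Z₁.carrier → Z₂.carrier)
      (q : Z₂.carrier → Y.carrier),
      EObj.IsPWEmb k Z₁ X p ∧ EObj.IsOpen k Z₁ X p ∧
      EObj.IsHom Z₁ Z₂ h ∧ Function.Bijective h ∧
      EObj.IsPWEmb k Z₂ Y q ∧ EObj.IsOpen k Z₂ Y q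

/-!
Forest morphisms are exactly the maps restricting to bijections from the elements below `x` to the
elements below `f x`, pathwise embeddings are the morphisms reflecting the relations on chains, and
a pathwise embedding is open iff every upper bound of the image of a finite chain lifts to an upper
bound of the chain.

Given a positive bisimulation, Duplicator maintains a chain in `Z₁` whose images under `p` and
`q ∘ h` end with the elements chosen so far. A move of Spoiler in `A` is answered by lifting along
`p`, a move in `B` by lifting along `q` and then back through `h`; the final position is a partial
homomorphism because `p` reflects the relations on the chain and `q ∘ h` preserves them.

Conversely, the plays all of whose positions are winning for Duplicator form a tree. Its two
projections to `F_k^I(A)` and `F_k^I(B)` induce two sets of relations on it, and the identity is a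
morphism from the first to the second because winning positions are partial homomorphisms.
-/

namespace EObj

variable {V : Vocab} {k : ℕ} {X Y Z : EObj V}

/-! ### Forest orders -/

/-- The principal down-set of `x`; its cardinality is the height of `x` in the forest. -/
def down (X : EObj V) (x : X.carrier) : Set X.carrier := {y | X.le y x}

/-- The down-closure of `S`. For a finite chain `S` it carries the path spanned by `S`. -/
def below (X : EObj V) (S : Set X.carrier) : Set X.carrier := {y | ∃ x ∈ S, X.le y x}

namespace IsCoalg

theorem le_refl (hX : IsCoalg k X) (x : X.carrier) : X.le x x := hX.1 x

theorem le_trans (hX : IsCoalg k X) {x y z : X.carrier} (hxy : X.le x y) (hyz : X.le y z) :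
    X.le x z := hX.2.1 x y z hxy hyz

theorem le_antisymm (hX : IsCoalg k X) {x y : X.carrier} (hxy : X.le x y) (hyx : X.le y x) :
    x = y := hX.2.2.1 x y hxy hyx

theorem finite_down (hX : IsCoalg k X) (x : X.carrier) : (X.down x).Finite := (hX.2.2.2.1 x).1

theorem ncard_down_le (hX : IsCoalg k X) (x : X.carrier) : (X.down x).ncard ≤ k + 1 :=
  (hX.2.2.2.1 x).2.1

theorem total_of_le (hX : IsCoalg k X) {x y z : X.carrier} (hy : X.le y x) (hz : X.le z x) :
    X.le y z ∨ X.le z y := (hX.2.2.2.1 x).2.2 y z hy hz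

/-- The forest order of a coalgebra, giving access to the order theory of the library. -/
abbrev partialOrder (hX : IsCoalg k X) : PartialOrder X.carrier where
  le := X.le
  le_refl := hX.le_refl
  le_trans _ _ _ := hX.le_trans
  le_antisymm _ _ := hX.le_antisymm

theorem le_iff_reflTransGen_cover (hX : IsCoalg k X) {x y : X.carrier} :
    X.le x y ↔ Relation.ReflTransGen X.Cover x y := by
  let _ := hX.partialOrder
  let _ : LocallyFiniteOrder X.carrier :=
    .ofFiniteIcc fun _ b ↦ (hX.finite_down b).subset fun _ h ↦ h.2
  have cover_iff_covBy (a b : X.carrier) : X.Cover a b ↔ a ⋖ b :=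
    ⟨fun h ↦ covBy_iff_lt_and_eq_or_eq.2 ⟨lt_of_le_of_ne h.1 h.2.1, h.2.2⟩,
      fun h ↦ ⟨h.le, h.ne, fun _ ↦ h.eq_or_eq⟩⟩
  rw [funext₂ fun a b ↦ propext (cover_iff_covBy a b)]
  exact le_iff_reflTransGen_covBy (α := X.carrier)

theorem eq_or_exists_cover (hX : IsCoalg k X) {x y : X.carrier} (hxy : X.le x y) :
    y = x ∨ ∃ w, X.le x w ∧ X.Cover w y := by
  simpa only [← hX.le_iff_reflTransGen_cover] using
    Relation.ReflTransGen.cases_tail (hX.le_iff_reflTransGen_cover.1 hxy)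

theorem eq_of_cover_of_cover (hX : IsCoalg k X) {x y z : X.carrier}
    (hx : X.Cover x z) (hy : X.Cover y z) : x = y := by
  rcases hX.total_of_le hx.1 hy.1 with hxy | hyx
  · exact ((hx.2.2 y hxy hy.1).resolve_right hy.2.1).symm
  · exact (hy.2.2 x hyx hx.1).resolve_right hx.2.1

theorem total_of_isChain (hX : IsCoalg k X) {S : Set X.carrier} (hS : IsChain X.le S)
    {x y : X.carrier} (hx : x ∈ S) (hy : y ∈ S) : X.le x y ∨ X.le y x :=
  have : Std.Refl X.le := ⟨hX.le_refl⟩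
  hS.total hx hy

theorem exists_greatest_of_isChain (hX : IsCoalg k X) {S : Set X.carrier} (hfin : S.Finite)
    (hne : S.Nonempty) (hS : IsChain X.le S) : ∃ m ∈ S, ∀ x ∈ S, X.le x m := by
  let _ := hX.partialOrder
  obtain ⟨m, hm⟩ := hfin.exists_maximal hne
  exact ⟨m, hm.prop, fun x hx ↦ (hX.total_of_isChain hS hx hm.prop).elim id (hm.le_of_ge hx)⟩

theorem subset_below (hX : IsCoalg k X) (S : Set X.carrier) : S ⊆ X.below S :=
  fun x hx ↦ ⟨x, hx, hX.le_refl x⟩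

theorem mem_below_of_le (hX : IsCoalg k X) {S : Set X.carrier} {x y : X.carrier}
    (hxy : X.le x y) (hy : y ∈ X.below S) : x ∈ X.below S := by
  obtain ⟨z, hz, hyz⟩ := hy
  exact ⟨z, hz, hX.le_trans hxy hyz⟩

theorem finite_below (hX : IsCoalg k X) {S : Set X.carrier} (hS : S.Finite) :
    (X.below S).Finite :=
  (hS.biUnion fun x _ ↦ hX.finite_down x).subset fun _ ⟨_, hx, hyx⟩ ↦ Set.mem_biUnion hx hyx

theorem isChain_below (hX : IsCoalg k X) {S : Set X.carrier} (hS : IsChain X.le S) :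
    IsChain X.le (X.below S) := by
  rintro y ⟨x, hx, hyx⟩ y' ⟨x', hx', hyx'⟩ -
  rcases hX.total_of_isChain hS hx hx' with h | h
  · exact hX.total_of_le (hX.le_trans hyx h) hyx'
  · exact hX.total_of_le hyx (hX.le_trans hyx' h)

end IsCoalg

/-! ### Morphisms -/

section Morphisms

variable {f : X.carrier → Y.carrier}

theorem IsHom.comp {g : Y.carrier → Z.carrier} (hg : IsHom Y Z g) (hf : IsHom X Y f) :
    IsHom X Z fun x ↦ g (f x) :=
  ⟨fun r v h ↦ hg.1 r _ (hf.1 r v h), fun x y h ↦ hg.2.1 _ _ (hf.2.1 x y h),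
    fun x h ↦ hg.2.2.1 _ (hf.2.2.1 x h), fun x y h ↦ hg.2.2.2 _ _ (hf.2.2.2 x y h)⟩

theorem IsHom.map_le (hX : IsCoalg k X) (hY : IsCoalg k Y) (hf : IsHom X Y f)
    {x y : X.carrier} (hxy : X.le x y) : Y.le (f x) (f y) :=
  hY.le_iff_reflTransGen_cover.2 <|
    Relation.ReflTransGen.lift f hf.2.2.2 _ _ (hX.le_iff_reflTransGen_cover.1 hxy)

theorem IsHom.isChain_image (hX : IsCoalg k X) (hY : IsCoalg k Y) (hf : IsHom X Y f)
    {S : Set X.carrier} (hS : IsChain X.le S) : IsChain Y.le (f '' S) :=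
  hS.image_of_map_rel X.le Y.le f fun _ _ ↦ hf.map_le hX hY

theorem IsHom.eq_of_le_of_map_eq (hX : IsCoalg k X) (hY : IsCoalg k Y) (hf : IsHom X Y f)
    {x y : X.carrier} (hxy : X.le x y) (heq : f x = f y) : x = y := by
  rcases hX.eq_or_exists_cover hxy with rfl | ⟨w, hxw, hwy⟩
  · rfl
  · have hcover : Y.Cover (f w) (f y) := hf.2.2.2 w y hwy
    exact absurd (hY.le_antisymm hcover.1 (heq ▸ hf.map_le hX hY hxw)) hcover.2.1

theorem IsHom.injOn_of_isChain (hX : IsCoalg k X) (hY : IsCoalg k Y) (hf : IsHom X Y f)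
    {S : Set X.carrier} (hS : IsChain X.le S) : Set.InjOn f S := by
  intro x hx y hy heq
  rcases hX.total_of_isChain hS hx hy with hxy | hyx
  · exact hf.eq_of_le_of_map_eq hX hY hxy heq
  · exact (hf.eq_of_le_of_map_eq hX hY hyx heq.symm).symm

theorem IsHom.exists_cover_of_map_cover (hX : IsCoalg k X) (hY : IsCoalg k Y)
    (hf : IsHom X Y f) {x : X.carrier} {t : Y.carrier} (ht : Y.Cover t (f x)) :
    ∃ w, X.Cover w x ∧ f w = t := by
  have not_isRoot : ¬ X.IsRoot x := fun hx ↦ ht.2.1 (hf.2.2.1 x hx t ht.1)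
  obtain ⟨y, hyx, hne⟩ : ∃ y, X.le y x ∧ y ≠ x := by simpa [IsRoot] using not_isRoot
  obtain ⟨w, -, hwx⟩ := (hX.eq_or_exists_cover hyx).resolve_left hne.symm
  exact ⟨w, hwx, hY.eq_of_cover_of_cover (hf.2.2.2 w x hwx) ht⟩

theorem IsHom.exists_le_of_le_map (hX : IsCoalg k X) (hY : IsCoalg k Y) (hf : IsHom X Y f)
    {x : X.carrier} {t : Y.carrier} (ht : Y.le t (f x)) : ∃ y, X.le y x ∧ f y = t := by
  generalize hs : f x = s at ht
  induction hY.le_iff_reflTransGen_cover.1 ht generalizing x with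
  | refl => exact ⟨x, hX.le_refl x, hs⟩
  | tail htu hus ih =>
    obtain ⟨w, hwx, rfl⟩ := hf.exists_cover_of_map_cover hX hY (hs ▸ hus)
    obtain ⟨y, hyw, hy⟩ := ih rfl (hY.le_iff_reflTransGen_cover.2 htu)
    exact ⟨y, hX.le_trans hyw hwx.1, hy⟩

theorem IsHom.bijOn_down (hX : IsCoalg k X) (hY : IsCoalg k Y) (hf : IsHom X Y f)
    (x : X.carrier) : Set.BijOn f (X.down x) (Y.down (f x)) :=
  ⟨fun _ hy ↦ hf.map_le hX hY hy,
    hf.injOn_of_isChain hX hY fun _ hy _ hz _ ↦ hX.total_of_le hy hz,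
    fun _ ht ↦ hf.exists_le_of_le_map hX hY ht⟩

theorem IsHom.ncard_down_map (hX : IsCoalg k X) (hY : IsCoalg k Y) (hf : IsHom X Y f)
    (x : X.carrier) : (Y.down (f x)).ncard = (X.down x).ncard :=
  (hf.bijOn_down hX hY x).ncard_eq.symm

theorem IsHom.le_of_map_le_of_injective (hX : IsCoalg k X) (hY : IsCoalg k Y)
    (hf : IsHom X Y f) (hinj : Function.Injective f) {x y : X.carrier}
    (hxy : Y.le (f x) (f y)) : X.le x y := by
  obtain ⟨z, hzy, hz⟩ := hf.exists_le_of_le_map hX hY hxy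
  exact hinj hz ▸ hzy

theorem isHom_of_bijOn_down (hX : IsCoalg k X) (hY : IsCoalg k Y)
    (hrel : ∀ r v, X.rel r v → Y.rel r fun i ↦ f (v i))
    (hieq : ∀ x y, X.ieq x y → Y.ieq (f x) (f y))
    (hdown : ∀ x, Set.BijOn f (X.down x) (Y.down (f x))) : IsHom X Y f := by
  refine ⟨hrel, hieq, fun x hx t ht ↦ ?_, fun x y hxy ↦ ?_⟩
  · obtain ⟨z, hz, rfl⟩ := (hdown x).surjOn ht
    rw [hx z hz]
  · refine ⟨(hdown y).mapsTo hxy.1,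
      fun heq ↦ hxy.2.1 ((hdown y).injOn hxy.1 (hX.le_refl y) heq), fun t hxt hty ↦ ?_⟩
    obtain ⟨z, hzy, rfl⟩ := (hdown y).surjOn hty
    rcases hX.total_of_le hxy.1 hzy with hxz | hzx
    · exact (hxy.2.2 z hxz hzy).imp (congrArg f) (congrArg f)
    · exact .inl (hY.le_antisymm ((hdown x).mapsTo hzx) hxt)

end Morphisms

/-! ### Path embeddings -/

/-- The induced substructure on `D`, with the restricted order. -/
def induce (X : EObj V) (D : Set X.carrier) : EObj V where
  carrier := D
  rel r v := X.rel r fun i ↦ (v i).1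
  ieq x y := X.ieq x.1 y.1
  le x y := X.le x.1 y.1

theorem IsCoalg.induce (hX : IsCoalg k X) (D : Set X.carrier) : IsCoalg k (X.induce D) := by
  refine ⟨fun x ↦ hX.le_refl x.1, fun _ _ _ ↦ hX.le_trans,
    fun _ _ hxy hyx ↦ Subtype.ext (hX.le_antisymm hxy hyx), fun x ↦ ?_, ?_⟩
  · have maps : Set.MapsTo Subtype.val ((X.induce D).down x) (X.down x.1) := fun _ h ↦ h
    have inj : Set.InjOn Subtype.val ((X.induce D).down x) := Subtype.val_injective.injOn
    have hfin := hX.finite_down x.1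
    exact ⟨.of_injOn maps inj hfin,
      (Set.ncard_le_ncard_of_injOn _ maps inj hfin).trans (hX.ncard_down_le x.1),
      fun _ _ ↦ hX.total_of_le⟩
  · rintro x y ⟨hne, hadj⟩
    refine hX.2.2.2.2 x.1 y.1 ⟨fun h ↦ hne (Subtype.ext h), hadj.imp_left ?_⟩
    rintro ⟨r, v, hv, ⟨i, rfl⟩, ⟨j, rfl⟩⟩
    exact ⟨r, _, hv, ⟨i, rfl⟩, ⟨j, rfl⟩⟩

theorem isEmb_val_induce_below (hX : IsCoalg k X) (S : Set X.carrier) :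
    IsEmb (X.induce (X.below S)) X Subtype.val :=
  ⟨isHom_of_bijOn_down (hX.induce _) hX (fun _ _ h ↦ h) (fun _ _ h ↦ h) fun x ↦
      ⟨fun _ h ↦ h, Subtype.val_injective.injOn,
        fun y hy ↦ ⟨⟨y, hX.mem_below_of_le hy x.2⟩, hy, rfl⟩⟩,
    Subtype.val_injective, fun _ _ h ↦ h, fun _ _ h ↦ h⟩

theorem IsEmb.codRestrict {f : X.carrier → Y.carrier} (hf : IsEmb X Y f) {D : Set Y.carrier}
    (hD : ∀ x, f x ∈ D) : IsEmb X (Y.induce D) fun x ↦ ⟨f x, hD x⟩ := by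
  obtain ⟨⟨map_rel, map_ieq, map_isRoot, map_cover⟩, hinj, hrel, hieq⟩ := hf
  refine ⟨⟨map_rel, map_ieq, fun x hx y hy ↦ Subtype.ext (map_isRoot x hx y.1 hy),
    fun x y hxy ↦ ?_⟩, fun x y hxy ↦ hinj (congrArg Subtype.val hxy), hrel, hieq⟩
  obtain ⟨hle, hne, hbetween⟩ := map_cover x y hxy
  exact ⟨hle, fun h ↦ hne (congrArg Subtype.val h),
    fun z hxz hzy ↦ (hbetween z.1 hxz hzy).imp Subtype.ext Subtype.ext⟩

theorem isPath_induce_below (hX : IsCoalg k X) {S : Set X.carrier} (hfin : S.Finite)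
    (hS : IsChain X.le S) : IsPath (X.induce (X.below S)) :=
  ⟨(hX.finite_below hfin).to_subtype,
    fun x y ↦ hX.total_of_isChain (hX.isChain_below hS) x.2 y.2⟩

section Pathwise

variable {f : X.carrier → Y.carrier}

theorem IsPWEmb.isEmb_induce_below (hX : IsCoalg k X) (hf : IsPWEmb k X Y f)
    {S : Set X.carrier} (hfin : S.Finite) (hS : IsChain X.le S) :
    IsEmb (X.induce (X.below S)) Y fun x ↦ f x.1 :=
  hf.2 _ (hX.induce _) (isPath_induce_below hX hfin hS) _ (isEmb_val_induce_below hX S)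

theorem IsPWEmb.rel_of_isChain (hX : IsCoalg k X) (hf : IsPWEmb k X Y f) {r : V.Rel}
    {v : Fin (V.ar r) → X.carrier} (hv : IsChain X.le (Set.range v))
    (h : Y.rel r fun i ↦ f (v i)) : X.rel r v :=
  (hf.isEmb_induce_below hX (Set.finite_range v) hv).2.2.1 r
    (fun i ↦ ⟨v i, hX.subset_below _ ⟨i, rfl⟩⟩) h

theorem IsPWEmb.ieq_of_total (hX : IsCoalg k X) (hf : IsPWEmb k X Y f) {x y : X.carrier}
    (hxy : X.le x y ∨ X.le y x) (h : Y.ieq (f x) (f y)) : X.ieq x y :=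
  (hf.isEmb_induce_below hX (Set.toFinite {x, y})
    (IsChain.singleton.insert fun _ hy _ ↦ hy ▸ hxy)).2.2.2
    ⟨x, hX.subset_below _ (.inl rfl)⟩ ⟨y, hX.subset_below _ (.inr rfl)⟩ h

theorem isPWEmb_of_reflects (hX : IsCoalg k X) (hY : IsCoalg k Y) (hf : IsHom X Y f)
    (hrel : ∀ r v, (∀ i j, X.le (v i) (v j) ∨ X.le (v j) (v i)) →
      (Y.rel r fun i ↦ f (v i)) → X.rel r v)
    (hieq : ∀ x y, X.le x y ∨ X.le y x → Y.ieq (f x) (f y) → X.ieq x y) : IsPWEmb k X Y f := by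
  refine ⟨hf, fun P hP hpath m hm ↦ ?_⟩
  have total (a b : P.carrier) : X.le (m a) (m b) ∨ X.le (m b) (m a) :=
    (hpath.2 a b).imp (hm.1.map_le hP hX) (hm.1.map_le hP hX)
  have isChain_range : IsChain X.le (Set.range m) := by
    rintro _ ⟨a, rfl⟩ _ ⟨b, rfl⟩ -
    exact total a b
  exact ⟨hf.comp hm.1,
    fun a b hab ↦ hm.2.1 (hf.injOn_of_isChain hX hY isChain_range ⟨a, rfl⟩ ⟨b, rfl⟩ hab),
    fun r v h ↦ hm.2.2.1 r v (hrel r _ (fun i j ↦ total _ _) h),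
    fun a b h ↦ hm.2.2.2 a b (hieq _ _ (total a b) h)⟩

theorem IsPWEmb.isHom_of_comp {Q : EObj V} (hQ : IsCoalg k Q) (hX : IsCoalg k X)
    (hY : IsCoalg k Y) (hf : IsPWEmb k X Y f) {d : Q.carrier → X.carrier}
    (hd : IsChain X.le (Set.range d)) (hfd : IsHom Q Y fun q ↦ f (d q)) : IsHom Q X d := by
  have injOn : Set.InjOn f (X.below (Set.range d)) :=
    hf.1.injOn_of_isChain hX hY (hX.isChain_below hd)
  have mem_below (q : Q.carrier) : d q ∈ X.below (Set.range d) := hX.subset_below _ ⟨q, rfl⟩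
  have mem_below_of_le {x q} (hx : X.le x (d q)) : x ∈ X.below (Set.range d) := ⟨d q, ⟨q, rfl⟩, hx⟩
  have f_bijOn (q : Q.carrier) := hf.1.bijOn_down hX hY (d q)
  have fd_bijOn (q : Q.carrier) := hfd.bijOn_down hQ hY q
  refine isHom_of_bijOn_down hQ hX
    (fun r v h ↦ hf.rel_of_isChain hX (hd.mono (Set.range_comp_subset_range v d)) (hfd.1 r v h))
    (fun a b h ↦ hf.ieq_of_total hX (hX.total_of_isChain hd ⟨a, rfl⟩ ⟨b, rfl⟩) (hfd.2.1 a b h))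
    fun q ↦ ⟨fun a ha ↦ ?_, fun a ha b hb hab ↦ (fd_bijOn q).injOn ha hb (congrArg f hab),
      fun x hx ↦ ?_⟩
  · obtain ⟨x, hx, hfx⟩ := (f_bijOn q).surjOn ((fd_bijOn q).mapsTo ha)
    rwa [← injOn (mem_below_of_le hx) (mem_below a) hfx]
  · obtain ⟨a, ha, hfa⟩ := (fd_bijOn q).surjOn ((f_bijOn q).mapsTo hx)
    exact ⟨a, ha, injOn (mem_below a) (mem_below_of_le hx) hfa⟩

/-! ### Open pathwise embeddings -/

/-- Every upper bound of the image of a finite chain under `f` lifts to an upper bound of the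
chain. For a pathwise embedding this is openness, phrased without quantifying over paths. -/
def LiftsUpperBounds (X Y : EObj V) (f : X.carrier → Y.carrier) : Prop :=
  ∀ S : Set X.carrier, S.Finite → IsChain X.le S → ∀ s, (∀ x ∈ S, Y.le (f x) s) →
    ∃ z, f z = s ∧ ∀ x ∈ S, X.le x z

theorem IsOpen.liftsUpperBounds (hX : IsCoalg k X) (hY : IsCoalg k Y) (hf : IsPWEmb k X Y f)
    (hopen : IsOpen k X Y f) : LiftsUpperBounds X Y f := by
  intro S hfin hS s hs
  have map_mem (x : X.below S) : f x ∈ Y.below {s} := by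
    obtain ⟨x, y, hy, hxy⟩ := x
    exact ⟨s, rfl, hY.le_trans (hf.1.map_le hX hY hxy) (hs y hy)⟩
  have s_mem : s ∈ Y.below {s} := hY.subset_below _ rfl
  obtain ⟨d, hd, hdm, hfd⟩ := hopen (X.induce (X.below S)) (Y.induce (Y.below {s}))
    (hX.induce _) (isPath_induce_below hX hfin hS)
    (hY.induce _) (isPath_induce_below hY (Set.finite_singleton s) IsChain.singleton)
    (fun x ↦ ⟨f x.1, map_mem x⟩) Subtype.val Subtype.val
    ((hf.isEmb_induce_below hX hfin hS).codRestrict map_mem)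
    (isEmb_val_induce_below hX S) (isEmb_val_induce_below hY {s}) fun _ ↦ rfl
  refine ⟨d ⟨s, s_mem⟩, hfd _, fun x hx ↦ ?_⟩
  have x_mem : x ∈ X.below S := hX.subset_below S hx
  have d_le : X.le (d ⟨f x, map_mem ⟨x, x_mem⟩⟩) (d ⟨s, s_mem⟩) :=
    hd.map_le (hY.induce _) hX (hs x hx)
  rwa [hdm ⟨x, x_mem⟩] at d_le

theorem LiftsUpperBounds.isOpen (hX : IsCoalg k X) (hY : IsCoalg k Y) (hf : IsPWEmb k X Y f)
    (hlift : LiftsUpperBounds X Y f) : IsOpen k X Y f := by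
  intro P Q hP hPpath hQ hQpath i m n _ hm hn hcomm
  have := hPpath.1
  have := hQpath.1
  rcases isEmpty_or_nonempty Q.carrier with hempty | hne
  · refine ⟨isEmptyElim, hf.isHom_of_comp hQ hX hY ?_ ?_, fun x ↦ isEmptyElim (i x), isEmptyElim⟩
    · rw [Set.range_eq_empty]
      exact IsChain.empty
    · convert hn.1
  obtain ⟨u, -, hu⟩ := hQ.exists_greatest_of_isChain Set.finite_univ Set.univ_nonempty
    fun a _ b _ _ ↦ hQpath.2 a b
  have le_nu (q : Q.carrier) : Y.le (n q) (n u) := hn.1.map_le hQ hY (hu q trivial)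
  have isChain_range : IsChain X.le (Set.range m) :=
    Set.image_univ ▸ hm.1.isChain_image hP hX fun a _ b _ _ ↦ hPpath.2 a b
  obtain ⟨z, hz, hmz⟩ := hlift _ (Set.finite_range m) isChain_range (n u)
    (by rintro _ ⟨x, rfl⟩; exact hcomm x ▸ le_nu (i x))
  choose d hdz hfd using fun q ↦ hf.1.exists_le_of_le_map hX hY (hz ▸ le_nu q)
  refine ⟨d, hf.isHom_of_comp hQ hX hY ?_ ?_, fun x ↦ ?_, hfd⟩
  · rintro _ ⟨a, rfl⟩ _ ⟨b, rfl⟩ -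
    exact hX.total_of_le (hdz a) (hdz b)
  · simpa only [hfd] using hn.1
  · exact (hf.1.bijOn_down hX hY z).injOn (hdz (i x)) (hmz _ ⟨x, rfl⟩)
      ((hfd (i x)).trans (hcomm x))

end Pathwise

/-! ### Coalgebras of sequences -/

theorem isCoalg_of_injective_toList {γ : Type} {toList : X.carrier → List γ}
    (hinj : Function.Injective toList) (hle : ∀ x y, X.le x y ↔ toList x <+: toList y)
    (hlen : ∀ x, (toList x).length ≤ k)
    (hrel : ∀ r v, X.rel r v → ∀ i j, X.le (v i) (v j) ∨ X.le (v j) (v i))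
    (hieq : ∀ x y, X.ieq x y → X.le x y ∨ X.le y x) : IsCoalg k X := by
  have le_refl (x : X.carrier) : X.le x x := (hle x x).2 List.prefix_rfl
  have adj_total (x y : X.carrier) (h : X.Adj x y) : X.le x y ∨ X.le y x := by
    rcases h with ⟨-, ⟨r, v, hv, ⟨i, rfl⟩, ⟨j, rfl⟩⟩ | h | h⟩
    · exact hrel r v hv i j
    · exact hieq x y h
    · exact (hieq y x h).symm
  refine ⟨le_refl, fun x y z hxy hyz ↦ (hle x z).2 (((hle x y).1 hxy).trans ((hle y z).1 hyz)),
    fun x y hxy hyx ↦ hinj (((hle x y).1 hxy).eq_of_length_le ((hle y x).1 hyx).length_le),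
    fun x ↦ ?_, adj_total⟩
  have maps : Set.MapsTo (fun y ↦ (toList y).length) (X.down x) (Set.Iic k) := fun y _ ↦ hlen y
  have inj : Set.InjOn (fun y ↦ (toList y).length) (X.down x) := fun y hy z hz hyz ↦
    hinj ((List.prefix_of_prefix_length_le ((hle y x).1 hy) ((hle z x).1 hz) hyz.le).eq_of_length
      hyz)
  refine ⟨.of_injOn maps inj (Set.finite_Iic k), ?_, fun y z hy hz ↦ ?_⟩
  · exact (Set.ncard_le_ncard_of_injOn _ maps inj (Set.finite_Iic k)).trans
      (by simp [Set.ncard_eq_toFinset_card'])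
  · rw [hle, hle]
    exact List.prefix_or_prefix_of_prefix ((hle y x).1 hy) ((hle z x).1 hz)

section FE

variable {α : Type} {A : Str V α}

theorem isCoalg_FE : IsCoalg k (FE V k A) :=
  isCoalg_of_injective_toList Subtype.val_injective (fun _ _ ↦ Iff.rfl) (fun s ↦ s.2.2)
    (fun _ _ h ↦ h.1) fun _ _ h ↦ h.1

theorem ncard_down_FE (s : (FE V k A).carrier) : ((FE V k A).down s).ncard = s.1.length := by
  have bijOn : Set.BijOn (fun t ↦ t.1.length) ((FE V k A).down s) (Set.Icc 1 s.1.length) := by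
    refine ⟨fun t ht ↦ ⟨List.length_pos_of_ne_nil t.2.1, List.IsPrefix.length_le ht⟩,
      fun t ht u hu htu ↦ Subtype.ext
        ((List.prefix_of_prefix_length_le ht hu htu.le).eq_of_length htu), fun n hn ↦ ?_⟩
    have length_take : (s.1.take n).length = n := List.length_take_of_le hn.2
    exact ⟨⟨s.1.take n, List.ne_nil_of_length_pos (length_take.symm ▸ hn.1),
      length_take.le.trans (hn.2.trans s.2.2)⟩, List.take_prefix n s.1, length_take⟩
  rw [bijOn.ncard_eq]
  simp [Set.ncard_eq_toFinset_card']

theorem exists_upperBound_FE_getLast_eq {S : Set (FE V k A).carrier} (hfin : S.Finite)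
    (hS : IsChain (FE V k A).le S) {n : ℕ} (hn : n < k) (hlen : ∀ s ∈ S, s.1.length ≤ n) (a : α) :
    ∃ t : (FE V k A).carrier, (∀ s ∈ S, (FE V k A).le s t) ∧ t.1.length ≤ n + 1 ∧
      t.1.getLast t.2.1 = a := by
  obtain ⟨l, hl, hSl⟩ : ∃ l : List α, l.length ≤ n ∧ ∀ s ∈ S, s.1 <+: l := by
    rcases S.eq_empty_or_nonempty with rfl | hne
    · exact ⟨[], by simp, by simp⟩
    · obtain ⟨m, hm, hSm⟩ := isCoalg_FE.exists_greatest_of_isChain hfin hne hS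
      exact ⟨m.1, hlen m hm, hSm⟩
  have length_append : (l ++ [a]).length ≤ n + 1 := by simpa using hl
  exact ⟨⟨l ++ [a], by simp, length_append.trans hn⟩,
    fun s hs ↦ (hSl s hs).trans (l.prefix_append [a]), length_append, by simp⟩

end FE

end EObj

/-! ### Winning positions -/

section Game

variable {V : Vocab} {α β : Type} {A : Str V α} {B : Str V β}

theorem isPartialHom_iff_forall_mem {h : List (α × β)} :
    IsPartialHom A B h ↔ (∀ c ∈ h, ∀ d ∈ h, c.1 = d.1 → c.2 = d.2) ∧
      ∀ (r : V.Rel) (v : Fin (V.ar r) → α × β), (∀ i, v i ∈ h) →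
        (A.rel r fun i ↦ (v i).1) → B.rel r fun i ↦ (v i).2 := by
  constructor
  · rintro ⟨functional, preserves⟩
    refine ⟨fun c hc d hd ↦ ?_, fun r v hv ↦ ?_⟩
    · obtain ⟨i, rfl⟩ := List.get_of_mem hc
      obtain ⟨j, rfl⟩ := List.get_of_mem hd
      exact functional i j
    · choose i hi using fun t ↦ List.get_of_mem (hv t)
      simpa only [hi] using preserves r i
  · rintro ⟨functional, preserves⟩
    exact ⟨fun i j ↦ functional _ (h.get_mem i) _ (h.get_mem j),
      fun r v ↦ preserves r _ fun t ↦ h.get_mem (v t)⟩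

theorem IsPartialHom.mono {h h' : List (α × β)} (hh : h ⊆ h') (hom : IsPartialHom A B h') :
    IsPartialHom A B h := by
  rw [isPartialHom_iff_forall_mem] at hom ⊢
  exact ⟨fun c hc d hd ↦ hom.1 c (hh hc) d (hh hd),
    fun r v hv ↦ hom.2 r v fun i ↦ hh (hv i)⟩

theorem PEFWin.isPartialHom [Nonempty α] {n : ℕ} {h : List (α × β)} (hwin : PEFWin A B n h) :
    IsPartialHom A B h := by
  induction n generalizing h with
  | zero => exact hwin
  | succ n ih =>
    obtain ⟨b, hb⟩ := hwin.1 (Classical.arbitrary α)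
    exact (ih hb).mono (List.subset_append_left h _)

/-- `l` is a play of the `k`-round game from `A` to `B` all of whose positions, including the
initial one, are winning for Duplicator. The subtraction is only meaningful for `l.length ≤ k`. -/
def IsWinningPlay (A : Str V α) (B : Str V β) (k : ℕ) (l : List (α × β)) : Prop :=
  ∀ l', l' <+: l → PEFWin A B (k - l'.length) l'

variable {k : ℕ} {l l' : List (α × β)}

theorem IsWinningPlay.of_prefix (hl : IsWinningPlay A B k l) (h : l' <+: l) :
    IsWinningPlay A B k l' :=
  fun m hm ↦ hl m (hm.trans h)

theorem isWinningPlay_nil (hwin : PEFWin A B k []) : IsWinningPlay A B k [] := by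
  intro l hl
  rwa [List.prefix_nil.1 hl]

theorem IsWinningPlay.isPartialHom (hl : IsWinningPlay A B k l) (hne : l ≠ []) :
    IsPartialHom A B l :=
  have : Nonempty α := ⟨(l.head hne).1⟩
  (hl l List.prefix_rfl).isPartialHom

theorem IsWinningPlay.append_singleton (hl : IsWinningPlay A B k l) {c : α × β}
    (hc : PEFWin A B (k - (l.length + 1)) (l ++ [c])) : IsWinningPlay A B k (l ++ [c]) := by
  intro l' hl'
  rcases List.prefix_concat_iff.1 hl' with rfl | hl'
  · rwa [List.length_append, List.length_singleton]
  · exact hl l' hl'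

theorem IsWinningPlay.pefWin_succ (hl : IsWinningPlay A B k l) (hlen : l.length < k) :
    PEFWin A B (k - (l.length + 1) + 1) l := by
  have h := hl l List.prefix_rfl
  rwa [show k - l.length = k - (l.length + 1) + 1 by omega] at h

theorem IsWinningPlay.exists_append_fst (hl : IsWinningPlay A B k l) (hlen : l.length < k) (a : α) :
    ∃ c : α × β, c.1 = a ∧ IsWinningPlay A B k (l ++ [c]) := by
  obtain ⟨b, hb⟩ := (hl.pefWin_succ hlen).1 a
  exact ⟨(a, b), rfl, hl.append_singleton hb⟩

theorem IsWinningPlay.exists_append_snd (hl : IsWinningPlay A B k l) (hlen : l.length < k) (b : β) :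
    ∃ c : α × β, c.2 = b ∧ IsWinningPlay A B k (l ++ [c]) := by
  obtain ⟨a, ha⟩ := (hl.pefWin_succ hlen).2 b
  exact ⟨(a, b), rfl, hl.append_singleton ha⟩

end Game

namespace EObj

/-! ### From bisimulations to strategies -/

section Strategy

variable {V : Vocab} {k : ℕ} {α β : Type} {A : Str V α} {B : Str V β}

theorem LiftsUpperBounds.exists_upperBound_getLast_eq {Z : EObj V} (hZ : IsCoalg k Z)
    {f : Z.carrier → (FE V k A).carrier} (hf : IsHom Z (FE V k A) f)
    (hlift : LiftsUpperBounds Z (FE V k A) f) {S : Set Z.carrier} (hfin : S.Finite)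
    (hS : IsChain Z.le S) {n : ℕ} (hn : n < k) (hdown : ∀ x ∈ S, (Z.down x).ncard ≤ n) (a : α) :
    ∃ z, (∀ x ∈ S, Z.le x z) ∧ (Z.down z).ncard ≤ n + 1 ∧
      (f z).1.getLast (f z).2.1 = a := by
  have length_map (x : Z.carrier) : (f x).1.length = (Z.down x).ncard := by
    rw [← ncard_down_FE, hf.ncard_down_map hZ isCoalg_FE]
  obtain ⟨t, hSt, ht, hlast⟩ := exists_upperBound_FE_getLast_eq (hfin.image f)
    (hf.isChain_image hZ isCoalg_FE hS) hn
    (by rintro _ ⟨x, hx, rfl⟩; exact (length_map x).trans_le (hdown x hx)) a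
  obtain ⟨z, rfl, hz⟩ := hlift S hfin hS t fun x hx ↦ hSt _ ⟨x, hx, rfl⟩
  exact ⟨z, hz, (length_map z).symm.trans_le ht, hlast⟩

/-- The pair of elements chosen in the round that reaches the position `z` of a span
`F_k^I(A) ⟵p Z ⟶q F_k^I(B)`. -/
def lastPair {Z : EObj V} (p : Z.carrier → (FE V k A).carrier) (q : Z.carrier → (FE V k B).carrier)
    (z : Z.carrier) : α × β :=
  ((p z).1.getLast (p z).2.1, (q z).1.getLast (q z).2.1)

theorem isPartialHom_map_lastPair {Z : EObj V} (hZ : IsCoalg k Z)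
    {p : Z.carrier → (FE V k A).carrier} {q : Z.carrier → (FE V k B).carrier}
    (hp : IsPWEmb k Z (FE V k A) p) (hq : IsHom Z (FE V k B) q) {w : List Z.carrier}
    (hw : IsChain Z.le {x | x ∈ w}) : IsPartialHom A B (w.map (lastPair p q)) := by
  have total {x y : Z.carrier} (hx : x ∈ w) (hy : y ∈ w) : Z.le x y ∨ Z.le y x :=
    hZ.total_of_isChain hw hx hy
  have total_map {x y : Z.carrier} (hx : x ∈ w) (hy : y ∈ w) :=
    (total hx hy).imp (hp.1.map_le hZ isCoalg_FE) (hp.1.map_le hZ isCoalg_FE)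
  refine isPartialHom_iff_forall_mem.2 ⟨fun c hc d hd heq ↦ ?_, fun r v hv hrel ↦ ?_⟩
  · obtain ⟨x, hx, rfl⟩ := List.mem_map.1 hc
    obtain ⟨y, hy, rfl⟩ := List.mem_map.1 hd
    have hieq : Z.ieq x y := hp.ieq_of_total hZ (total hx hy) ⟨total_map hx hy, heq⟩
    exact (hq.2.1 x y hieq).2
  · choose x hx hxv using fun i ↦ List.mem_map.1 (hv i)
    obtain rfl : (fun i ↦ lastPair p q (x i)) = v := funext hxv
    have hrelZ : Z.rel r x := hp.rel_of_isChain hZ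
      (hw.mono (Set.range_subset_iff.2 hx)) ⟨fun i j ↦ total_map (hx i) (hx j), hrel⟩
    exact (hq.1 r x hrelZ).2

theorem isChain_mem_append_singleton {γ : Type} {r : γ → γ → Prop} {w : List γ} {z : γ}
    (hw : IsChain r {x | x ∈ w}) (hz : ∀ x ∈ w, r x z) : IsChain r {x | x ∈ w ++ [z]} := by
  have mem_eq : {x | x ∈ w ++ [z]} = insert z {x | x ∈ w} := by
    ext x
    simp [or_comm]
  exact mem_eq ▸ hw.insert fun x hx _ ↦ .inr (hz x hx)

theorem pefWin_map_lastPair {Z₁ Z₂ : EObj V} (hZ₁ : IsCoalg k Z₁) (hZ₂ : IsCoalg k Z₂)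
    {p : Z₁.carrier → (FE V k A).carrier} {h : Z₁.carrier → Z₂.carrier}
    {q : Z₂.carrier → (FE V k B).carrier}
    (hp : IsPWEmb k Z₁ (FE V k A) p) (hp_lift : LiftsUpperBounds Z₁ (FE V k A) p)
    (hh : IsHom Z₁ Z₂ h) (h_bij : Function.Bijective h)
    (hq : IsHom Z₂ (FE V k B) q) (hq_lift : LiftsUpperBounds Z₂ (FE V k B) q)
    {n : ℕ} {w : List Z₁.carrier} (hn : w.length + n = k) (hw : IsChain Z₁.le {x | x ∈ w})
    (hdown : ∀ x ∈ w, (Z₁.down x).ncard ≤ w.length) :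
    PEFWin A B n (w.map (lastPair p fun z ↦ q (h z))) := by
  induction n generalizing w with
  | zero => exact isPartialHom_map_lastPair hZ₁ hp (hq.comp hh) hw
  | succ n ih =>
    have hlt : w.length < k := by omega
    have ncard_map (x : Z₁.carrier) := hh.ncard_down_map hZ₁ hZ₂ x
    have win_append {z : Z₁.carrier} (hwz : ∀ x ∈ w, Z₁.le x z)
        (hz : (Z₁.down z).ncard ≤ w.length + 1) :
        PEFWin A B n (w.map (lastPair p fun z ↦ q (h z)) ++ [lastPair p (fun z ↦ q (h z)) z]) := by
      have length_append : (w ++ [z]).length = w.length + 1 := List.length_append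
      have hdown' : ∀ x ∈ w ++ [z], (Z₁.down x).ncard ≤ (w ++ [z]).length := by
        rw [length_append]
        intro x hx
        rcases List.mem_append.1 hx with hx | hx
        · exact (hdown x hx).trans (Nat.le_succ _)
        · rwa [List.mem_singleton.1 hx]
      simpa using ih (w := w ++ [z]) (by omega) (isChain_mem_append_singleton hw hwz) hdown'
    refine ⟨fun a ↦ ?_, fun b ↦ ?_⟩
    · obtain ⟨z, hwz, hz, rfl⟩ := hp_lift.exists_upperBound_getLast_eq hZ₁ hp.1
        w.finite_toSet hw hlt hdown a
      exact ⟨_, win_append hwz hz⟩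
    · obtain ⟨z', hwz, hz, rfl⟩ := hq_lift.exists_upperBound_getLast_eq hZ₂ hq
        (w.finite_toSet.image h) (hh.isChain_image hZ₁ hZ₂ hw) hlt
        (by rintro _ ⟨x, hx, rfl⟩; exact (ncard_map x).trans_le (hdown x hx)) b
      obtain ⟨z, rfl⟩ := h_bij.surjective z'
      exact ⟨_, win_append
        (fun x hx ↦ hh.le_of_map_le_of_injective hZ₁ hZ₂ h_bij.injective (hwz _ ⟨x, hx, rfl⟩))
        (ncard_map z ▸ hz)⟩

theorem pefWin_of_posBisimE (hbisim : PosBisimE V k (FE V k A) (FE V k B)) :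
    PEFWin A B k [] := by
  obtain ⟨Z₁, Z₂, hZ₁, hZ₂, p, h, q, hp, hp_open, hh, h_bij, hq, hq_open⟩ := hbisim
  exact pefWin_map_lastPair (w := []) hZ₁ hZ₂ hp (hp_open.liftsUpperBounds hZ₁ isCoalg_FE hp)
    hh h_bij hq.1 (hq_open.liftsUpperBounds hZ₂ isCoalg_FE hq) (by simp) (by simp) (by simp)

end Strategy

/-! ### From strategies to bisimulations -/

/-- The tree of non-empty sequences of at most `k` moves satisfying `W`, with the prefix order.
The map `π` reads off the element of `A` chosen in a move; a tuple of pairwise comparable sequences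
is related iff the elements chosen in their last moves are related in `J(A)`. -/
def playTree (V : Vocab) (k : ℕ) {γ α : Type} (W : List γ → Prop) (π : γ → α) (A : Str V α) :
    EObj V where
  carrier := {l : List γ // (l ≠ [] ∧ l.length ≤ k) ∧ W l}
  rel r v := (∀ i j, (v i).1 <+: (v j).1 ∨ (v j).1 <+: (v i).1) ∧
    A.rel r fun i ↦ π ((v i).1.getLast (v i).2.1.1)
  ieq s t := (s.1 <+: t.1 ∨ t.1 <+: s.1) ∧
    π (s.1.getLast s.2.1.1) = π (t.1.getLast t.2.1.1)
  le s t := s.1 <+: t.1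

section PlayTree

variable {V : Vocab} {k : ℕ} {γ α : Type} {W : List γ → Prop} {π : γ → α} {A : Str V α}

/-- The projection of the tree of plays to the sequences of elements of `A` chosen in them. -/
def playProj (s : (playTree V k W π A).carrier) : (FE V k A).carrier :=
  ⟨s.1.map π, by simpa using s.2.1⟩

theorem isCoalg_playTree : IsCoalg k (playTree V k W π A) :=
  isCoalg_of_injective_toList Subtype.val_injective (fun _ _ ↦ Iff.rfl) (fun s ↦ s.2.1.2)
    (fun _ _ h ↦ h.1) fun _ _ h ↦ h.1

theorem getLast_playProj (s : (playTree V k W π A).carrier) :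
    (playProj s).1.getLast (playProj s).2.1 = π (s.1.getLast s.2.1.1) :=
  List.getLast_map _

theorem bijOn_down_playProj (hW : ∀ l l', l' <+: l → W l → W l')
    (s : (playTree V k W π A).carrier) :
    Set.BijOn playProj ((playTree V k W π A).down s) ((FE V k A).down (playProj s)) := by
  refine ⟨fun t ht ↦ List.IsPrefix.map π ht, fun t ht u hu htu ↦ ?_, fun t ht ↦ ?_⟩
  · have length_eq : t.1.length = u.1.length := by
      simpa [playProj] using congrArg (fun x ↦ x.1.length) htu
    exact Subtype.ext ((List.prefix_of_prefix_length_le ht hu length_eq.le).eq_of_length length_eq)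
  · obtain ⟨l, hl, hlt⟩ := List.prefix_map_iff.1 ht
    have l_mem : l ≠ [] ∧ l.length ≤ k := by simpa [hlt] using t.2
    exact ⟨⟨l, l_mem, hW s.1 l hl s.2.2⟩, hl, Subtype.ext hlt.symm⟩

theorem isPWEmb_playProj (hW : ∀ l l', l' <+: l → W l → W l') :
    IsPWEmb k (playTree V k W π A) (FE V k A) playProj := by
  have map_total {s t : (playTree V k W π A).carrier} (h : s.1 <+: t.1 ∨ t.1 <+: s.1) :
      s.1.map π <+: t.1.map π ∨ t.1.map π <+: s.1.map π := h.imp (·.map π) (·.map π)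
  refine isPWEmb_of_reflects isCoalg_playTree isCoalg_FE
    (isHom_of_bijOn_down isCoalg_playTree isCoalg_FE
      (fun r v h ↦ ⟨fun i j ↦ map_total (h.1 i j), ?_⟩) (fun s t h ↦ ⟨map_total h.1, ?_⟩)
      (bijOn_down_playProj hW))
    (fun r v hv h ↦ ⟨hv, ?_⟩) fun s t hst h ↦ ⟨hst, ?_⟩
  all_goals simpa only [getLast_playProj] using h.2

theorem exists_prefix_map_eq_append
    (hext : ∀ l, W l → l.length < k → ∀ a, ∃ c, π c = a ∧ W (l ++ [c])) {l : List γ} (hl : W l)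
    {t : List α} (hlen : l.length + t.length ≤ k) :
    ∃ l', W l' ∧ l <+: l' ∧ l'.map π = l.map π ++ t := by
  induction t generalizing l with
  | nil => exact ⟨l, hl, List.prefix_rfl, by simp⟩
  | cons a t ih =>
    rw [List.length_cons] at hlen
    obtain ⟨c, rfl, hc⟩ := hext l hl (by omega) a
    obtain ⟨l', hl', hprefix, hmap⟩ :=
      ih hc (by rw [List.length_append, List.length_singleton]; omega)
    exact ⟨l', hl', (l.prefix_append [c]).trans hprefix, by simpa using hmap⟩

theorem liftsUpperBounds_playProj (hnil : W [])
    (hext : ∀ l, W l → l.length < k → ∀ a, ∃ c, π c = a ∧ W (l ++ [c])) :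
    LiftsUpperBounds (playTree V k W π A) (FE V k A) playProj := by
  intro S hfin hS s hs
  obtain ⟨l, hl, hls, hSl⟩ : ∃ l, W l ∧ l.map π <+: s.1 ∧ ∀ x ∈ S, x.1 <+: l := by
    rcases S.eq_empty_or_nonempty with rfl | hne
    · exact ⟨[], hnil, by simp, by simp⟩
    · obtain ⟨m, hm, hSm⟩ := isCoalg_playTree.exists_greatest_of_isChain hfin hne hS
      exact ⟨m.1, m.2.2, hs m hm, hSm⟩
  obtain ⟨t, ht⟩ := hls
  have hlen : l.length + t.length ≤ k := by simpa [← ht] using s.2.2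
  obtain ⟨l', hl', hll', hmap⟩ := exists_prefix_map_eq_append hext hl hlen
  have map_eq : l'.map π = s.1 := hmap.trans ht
  have extension_mem : l' ≠ [] ∧ l'.length ≤ k := by simpa [← map_eq] using s.2
  exact ⟨⟨l', extension_mem, hl'⟩, Subtype.ext map_eq, fun x hx ↦ (hSl x hx).trans hll'⟩

theorem isOpen_playProj (hW : ∀ l l', l' <+: l → W l → W l') (hnil : W [])
    (hext : ∀ l, W l → l.length < k → ∀ a, ∃ c, π c = a ∧ W (l ++ [c])) :
    IsOpen k (playTree V k W π A) (FE V k A) playProj :=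
  (liftsUpperBounds_playProj hnil hext).isOpen isCoalg_playTree isCoalg_FE (isPWEmb_playProj hW)

theorem isHom_id_playTree {β : Type} {B : Str V β} {W : List (α × β) → Prop}
    (har : ∀ r : V.Rel, V.ar r ≠ 0) (hhom : ∀ l ≠ [], W l → IsPartialHom A B l) :
    IsHom (playTree V k W Prod.fst A) (playTree V k W Prod.snd B) id := by
  have hom (m : (playTree V k W Prod.fst A).carrier) :=
    isPartialHom_iff_forall_mem.1 (hhom m.1 m.2.1.1 m.2.2)
  have getLast_mem {s m : (playTree V k W Prod.fst A).carrier} (h : s.1 <+: m.1) :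
      s.1.getLast s.2.1.1 ∈ m.1 := h.subset (List.getLast_mem _)
  refine ⟨fun r v h ↦ ⟨h.1, ?_⟩, fun s t h ↦ ⟨h.1, ?_⟩, fun _ h ↦ h, fun _ _ h ↦ h⟩
  · have : Nonempty (Fin (V.ar r)) := Fin.pos_iff_nonempty.1 (Nat.pos_of_ne_zero (har r))
    have isChain_range : IsChain (playTree V k W Prod.fst A).le (Set.range v) := by
      rintro _ ⟨i, rfl⟩ _ ⟨j, rfl⟩ -
      exact h.1 i j
    obtain ⟨m, -, hm⟩ := isCoalg_playTree.exists_greatest_of_isChain (Set.finite_range v)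
      (Set.range_nonempty v) isChain_range
    exact (hom m).2 r _ (fun i ↦ getLast_mem (hm _ ⟨i, rfl⟩)) h.2
  · rcases h.1 with hst | hts
    · exact (hom t).1 _ (getLast_mem hst) _ (getLast_mem List.prefix_rfl) h.2
    · exact (hom s).1 _ (getLast_mem List.prefix_rfl) _ (getLast_mem hts) h.2

end PlayTree

theorem posBisimE_of_pefWin {V : Vocab} {k : ℕ} {α β : Type} {A : Str V α} {B : Str V β}
    (har : ∀ r : V.Rel, V.ar r ≠ 0) (hwin : PEFWin A B k []) :
    PosBisimE V k (FE V k A) (FE V k B) := by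
  have prefix_closed (l l' : List (α × β)) (h : l' <+: l) (hl : IsWinningPlay A B k l) :
      IsWinningPlay A B k l' := hl.of_prefix h
  have hnil := isWinningPlay_nil hwin
  exact ⟨playTree V k (IsWinningPlay A B k) Prod.fst A,
    playTree V k (IsWinningPlay A B k) Prod.snd B,
    isCoalg_playTree, isCoalg_playTree, playProj, id, playProj,
    isPWEmb_playProj prefix_closed,
    isOpen_playProj prefix_closed hnil fun _ hl hlen ↦ hl.exists_append_fst hlen,
    isHom_id_playTree har fun _ hne hl ↦ hl.isPartialHom hne, Function.bijective_id,
    isPWEmb_playProj prefix_closed,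
    isOpen_playProj prefix_closed hnil fun _ hl hlen ↦ hl.exists_append_snd hlen⟩

end EObj

theorem positive_bisimulation_iff_positive_EF_game_general
    (V : Vocab) (har : ∀ r : V.Rel, V.ar r ≠ 0) {α β : Type} (A : Str V α) (B : Str V β) (k : ℕ) :
    PosBisimE V k (FE V k A) (FE V k B) ↔ PEFWin A B k [] :=
  ⟨EObj.pefWin_of_posBisimE, EObj.posBisimE_of_pefWin har⟩

/-- there exists a positive bisimulation from `F_k^I(A)` to `F_k^I(B)` in
`EM(E_k^I)` if, and only if, Duplicator has a winning strategy in the positive `k`-round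
Ehrenfeucht–Fraïssé game from `A` to `B`. -/
theorem positive_bisimulation_iff_positive_EF_game
    (V : Vocab) [Finite V.Rel] (har : ∀ r : V.Rel, V.ar r ≠ 0)
    {α β : Type} (A : Str V α) (B : Str V β) (k : ℕ) :
    PosBisimE V k (FE V k A) (FE V k B) ↔ PEFWin A B k [] :=
  positive_bisimulation_iff_positive_EF_game_general V har A B k
end

section
/- For all σ-structures A and B and every positive integer k, the following are equivalent: (i) every sentence of ⁺L^k that is true in A is true in B; (ii) Duplicator has a winning strategy in the positive k-pebble game from A to B. -/
/-- Positive formulas of the `k`-variable fragment `L^k` of the infinitary logic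
`L_{∞,ω}(σ)`: formulas using only the variables `x_1, …, x_k`, with set-sized
conjunctions and disjunctions, both quantifiers, and no negation symbol. -/
inductive PLFml (V : Vocab) (k : ℕ) : Type 1
  | rel (r : V.Rel) (v : Fin (V.ar r) → Fin k) : PLFml V k
  | eq (i j : Fin k) : PLFml V k
  | iand (ι : Type) (f : ι → PLFml V k) : PLFml V k
  | ior (ι : Type) (f : ι → PLFml V k) : PLFml V k
  | ex (i : Fin k) (φ : PLFml V k) : PLFml V k
  | all (i : Fin k) (φ : PLFml V k) : PLFml V k

namespace PLFml

/-- Free variables. -/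
def freeVars {V : Vocab} {k : ℕ} : PLFml V k → Set (Fin k)
  | .rel _ v => Set.range v
  | .eq i j => {i, j}
  | .iand _ f => ⋃ x, freeVars (f x)
  | .ior _ f => ⋃ x, freeVars (f x)
  | .ex i φ => freeVars φ \ {i}
  | .all i φ => freeVars φ \ {i}

/-- Satisfaction, relative to a partial environment. -/
def Sat {V : Vocab} {k : ℕ} {α : Type} (M : Str V α) :
    PLFml V k → (Fin k → Option α) → Prop
  | .rel r v, e => ∃ g : Fin (V.ar r) → α, (∀ i, e (v i) = some (g i)) ∧ M.rel r g
  | .eq i j, e => ∃ x : α, e i = some x ∧ e j = some x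
  | .iand _ f, e => ∀ x, Sat M (f x) e
  | .ior _ f, e => ∃ x, Sat M (f x) e
  | .ex i φ, e => ∃ a : α, Sat M φ (Function.update e i (some a))
  | .all i φ, e => ∀ a : α, Sat M φ (Function.update e i (some a))

end PLFml
/-- The relation determined by the current placings `ρ` of the `k` pairs of pebbles is a
partial homomorphism from `A` to `B`: it is functional and preserves the
interpretations of all relation symbols. -/
def PebblesHom {V : Vocab} {α β : Type} (A : Str V α) (B : Str V β) {k : ℕ}
    (ρ : Fin k → Option (α × β)) : Prop :=
  (∀ (p q : Fin k) (x x' : α) (y y' : β),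
    ρ p = some (x, y) → ρ q = some (x', y') → x = x' → y = y') ∧
  (∀ (r : V.Rel) (v : Fin (V.ar r) → Fin k) (g : Fin (V.ar r) → α × β),
    (∀ t, ρ (v t) = some (g t)) →
      A.rel r (fun t => (g t).1) → B.rel r fun t => (g t).2)

/-- Duplicator has a winning strategy in the positive `k`-pebble game from `A` to `B`:
in each round Spoiler places (or relocates) a pebble on an element of either structure
and Duplicator places the corresponding pebble on an element of the other structure;
Duplicator wins a round if the current pebble placings form a partial homomorphism from
`A` to `B`, and wins the game if they can keep winning after `n` rounds for every `n`.
This is rendered by the existence of a winning invariant. -/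
def PPebWin (V : Vocab) {α β : Type} (A : Str V α) (B : Str V β) (k : ℕ) : Prop :=
  ∃ S : (Fin k → Option (α × β)) → Prop,
    S (fun _ => none) ∧
    ∀ ρ, S ρ → PebblesHom A B ρ ∧
      (∀ (p : Fin k) (a : α), ∃ b : β, S (Function.update ρ p (some (a, b)))) ∧
      (∀ (p : Fin k) (b : β), ∃ a : α, S (Function.update ρ p (some (a, b))))

/-!
A winning invariant for Duplicator transfers every positive formula from left to right, by induction
on the formula: atoms are transferred because the pebbles form a partial homomorphism, `∃` and `∀`
because Duplicator can answer Spoiler's moves in `A` and in `B` respectively.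

Conversely, the positions that transfer every positive formula interpreted by the pebbles form a
winning invariant. If no answer `b` to Spoiler's move `a` were good, each `b` would come with a
formula `f b` that holds at `a` and fails at `b`, and `∃ x, ⋀ b, f b` would not be transferred.
Dually, a move `b` without a good answer is refuted by `∀ x, ⋁ a, f a`.
-/

section PartialEnv

variable {ι γ : Type*}

/-- The domain of a partial environment: the variables with a value, or, for a position of the
pebble game, the pebbles on the board. -/
def assignedVars (e : ι → Option γ) : Set ι := {i | (e i).isSome}

theorem mem_assignedVars_of_eq_some {e : ι → Option γ} {i : ι} {c : γ} (h : e i = some c) :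
    i ∈ assignedVars e :=
  Option.isSome_of_eq_some h

theorem assignedVars_none : assignedVars (fun _ : ι => (none : Option γ)) = ∅ :=
  Set.eq_empty_of_forall_notMem fun _ => Bool.false_ne_true

theorem assignedVars_update_some [DecidableEq ι] (e : ι → Option γ) (p : ι) (c : γ) :
    assignedVars (Function.update e p (some c)) = insert p (assignedVars e) := by
  ext i
  obtain rfl | hne := eq_or_ne i p
  · simp [assignedVars]
  · simp [assignedVars, hne]

end PartialEnv

section PebbleEnv

variable {ι α β : Type*} {ρ : ι → Option (α × β)} {i : ι}

/-- The partial environment in the left structure given by the pebbles `ρ`: variable `i` denotes the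
element under the `i`-th pebble. -/
def leftEnv (ρ : ι → Option (α × β)) : ι → Option α := Option.map Prod.fst ∘ ρ

/-- The partial environment in the right structure given by the pebbles `ρ`; see `leftEnv`. -/
def rightEnv (ρ : ι → Option (α × β)) : ι → Option β := Option.map Prod.snd ∘ ρ

theorem leftEnv_eq_some_iff {x : α} : leftEnv ρ i = some x ↔ ∃ y, ρ i = some (x, y) := by
  simp [leftEnv]

theorem rightEnv_eq_some {x : α} {y : β} (h : ρ i = some (x, y)) : rightEnv ρ i = some y := by
  simp [rightEnv, h]

theorem assignedVars_leftEnv (ρ : ι → Option (α × β)) :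
    assignedVars (leftEnv ρ) = assignedVars ρ := by
  simp [assignedVars, leftEnv]

theorem leftEnv_update_some [DecidableEq ι] (ρ : ι → Option (α × β)) (p : ι) (a : α) (b : β) :
    leftEnv (Function.update ρ p (some (a, b))) = Function.update (leftEnv ρ) p (some a) :=
  Function.comp_update ..

theorem rightEnv_update_some [DecidableEq ι] (ρ : ι → Option (α × β)) (p : ι) (a : α) (b : β) :
    rightEnv (Function.update ρ p (some (a, b))) = Function.update (rightEnv ρ) p (some b) :=
  Function.comp_update ..

end PebbleEnv

section PositiveGame

variable {V : Vocab} {k : ℕ} {α β : Type} {A : Str V α} {B : Str V β}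
  {ρ : Fin k → Option (α × β)}

namespace PLFml

theorem freeVars_rel_subset_of_sat {e : Fin k → Option α} {r : V.Rel} {v : Fin (V.ar r) → Fin k}
    (h : (rel r v).Sat A e) : (rel r v).freeVars ⊆ assignedVars e := by
  obtain ⟨g, hg, -⟩ := h
  exact Set.range_subset_iff.2 fun t => mem_assignedVars_of_eq_some (hg t)

theorem freeVars_eq_subset_of_sat {e : Fin k → Option α} {i j : Fin k}
    (h : (eq i j : PLFml V k).Sat A e) : (eq i j : PLFml V k).freeVars ⊆ assignedVars e := by
  obtain ⟨x, hi, hj⟩ := h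
  exact Set.pair_subset (mem_assignedVars_of_eq_some hi) (mem_assignedVars_of_eq_some hj)

end PLFml

theorem forall_sat_eq_imp_iff_functional :
    (∀ i j, (PLFml.eq i j).Sat A (leftEnv ρ) → (PLFml.eq i j).Sat B (rightEnv ρ)) ↔
      ∀ (p q : Fin k) (x x' : α) (y y' : β),
        ρ p = some (x, y) → ρ q = some (x', y') → x = x' → y = y' := by
  constructor
  · rintro transfer p q x _ y y' hp hq rfl
    obtain ⟨z, hpz, hqz⟩ :=
      transfer p q ⟨x, leftEnv_eq_some_iff.2 ⟨y, hp⟩, leftEnv_eq_some_iff.2 ⟨y', hq⟩⟩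
    rw [rightEnv_eq_some hp] at hpz
    rw [rightEnv_eq_some hq] at hqz
    exact Option.some_injective _ (hpz.trans hqz.symm)
  · rintro functional i j ⟨x, hi, hj⟩
    obtain ⟨y, hi⟩ := leftEnv_eq_some_iff.1 hi
    obtain ⟨y', hj⟩ := leftEnv_eq_some_iff.1 hj
    obtain rfl := functional i j x x y y' hi hj rfl
    exact ⟨y, rightEnv_eq_some hi, rightEnv_eq_some hj⟩

theorem sat_rel_imp_iff_preserves {r : V.Rel} {v : Fin (V.ar r) → Fin k} :
    ((PLFml.rel r v).Sat A (leftEnv ρ) → (PLFml.rel r v).Sat B (rightEnv ρ)) ↔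
      ∀ g : Fin (V.ar r) → α × β, (∀ t, ρ (v t) = some (g t)) →
        A.rel r (fun t => (g t).1) → B.rel r fun t => (g t).2 := by
  constructor
  · intro transfer g hg hA
    obtain ⟨y, hy, hB⟩ :=
      transfer ⟨fun t => (g t).1, fun t => leftEnv_eq_some_iff.2 ⟨_, hg t⟩, hA⟩
    have y_eq : y = fun t => (g t).2 := funext fun t =>
      Option.some_injective _ ((hy t).symm.trans (rightEnv_eq_some (hg t)))
    rwa [← y_eq]
  · rintro preserves ⟨x, hx, hA⟩
    choose y hy using fun t => leftEnv_eq_some_iff.1 (hx t)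
    exact ⟨y, fun t => rightEnv_eq_some (hy t), preserves (fun t => (x t, y t)) hy hA⟩

theorem pebblesHom_iff_atoms_transfer :
    PebblesHom A B ρ ↔
      (∀ i j, (PLFml.eq i j).Sat A (leftEnv ρ) → (PLFml.eq i j).Sat B (rightEnv ρ)) ∧
      ∀ r v, (PLFml.rel r v).Sat A (leftEnv ρ) → (PLFml.rel r v).Sat B (rightEnv ρ) :=
  and_congr forall_sat_eq_imp_iff_functional.symm
    (forall₂_congr fun _ _ => sat_rel_imp_iff_preserves.symm)

/-- A set `S` of positions closed under play: at every position in `S` Duplicator is winning the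
round and can answer each of Spoiler's moves within `S`. `PPebWin` asks for such an `S` containing
the initial position. -/
def IsWinningInvariant (A : Str V α) (B : Str V β) (S : (Fin k → Option (α × β)) → Prop) : Prop :=
  ∀ ρ, S ρ → PebblesHom A B ρ ∧
    (∀ (p : Fin k) (a : α), ∃ b : β, S (Function.update ρ p (some (a, b)))) ∧
    (∀ (p : Fin k) (b : β), ∃ a : α, S (Function.update ρ p (some (a, b))))

theorem IsWinningInvariant.sat_imp {S : (Fin k → Option (α × β)) → Prop}
    (hS : IsWinningInvariant A B S) (φ : PLFml V k) (hρ : S ρ) :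
    φ.Sat A (leftEnv ρ) → φ.Sat B (rightEnv ρ) := by
  induction φ generalizing ρ with
  | rel r v => exact (pebblesHom_iff_atoms_transfer.1 (hS ρ hρ).1).2 r v
  | eq i j => exact (pebblesHom_iff_atoms_transfer.1 (hS ρ hρ).1).1 i j
  | iand ι f ih => exact fun hA x => ih x hρ (hA x)
  | ior ι f ih => exact fun ⟨x, hA⟩ => ⟨x, ih x hρ hA⟩
  | ex p φ ih =>
    rintro ⟨a, ha⟩
    obtain ⟨b, hb⟩ := (hS ρ hρ).2.1 p a
    rw [← leftEnv_update_some ρ p a b] at ha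
    exact ⟨b, rightEnv_update_some ρ p a b ▸ ih hb ha⟩
  | all p φ ih =>
    intro hA b
    obtain ⟨a, ha⟩ := (hS ρ hρ).2.2 p b
    have hAa := hA a
    rw [← leftEnv_update_some ρ p a b] at hAa
    exact rightEnv_update_some ρ p a b ▸ ih ha hAa

/-- The position `ρ` transfers positive formulas from `A` to `B`. Only formulas whose free variables
are all pebbled count, so that at the initial position this is a condition on sentences. -/
def TransfersPositive (A : Str V α) (B : Str V β) (ρ : Fin k → Option (α × β)) : Prop :=
  ∀ φ : PLFml V k, φ.freeVars ⊆ assignedVars ρ → φ.Sat A (leftEnv ρ) → φ.Sat B (rightEnv ρ)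

theorem transfersPositive_none_iff :
    TransfersPositive A B (fun _ : Fin k => none) ↔
      ∀ φ : PLFml V k, φ.freeVars = ∅ → φ.Sat A (fun _ => none) → φ.Sat B (fun _ => none) := by
  simp only [TransfersPositive, assignedVars_none, Set.subset_empty_iff]
  rfl

theorem not_transfersPositive_update_iff {p : Fin k} {a : α} {b : β} :
    ¬ TransfersPositive A B (Function.update ρ p (some (a, b))) ↔
      ∃ φ : PLFml V k, φ.freeVars \ {p} ⊆ assignedVars ρ ∧
        φ.Sat A (Function.update (leftEnv ρ) p (some a)) ∧
        ¬ φ.Sat B (Function.update (rightEnv ρ) p (some b)) := by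
  simp only [TransfersPositive, assignedVars_update_some, leftEnv_update_some, rightEnv_update_some,
    Set.sdiff_singleton_subset_iff, not_forall, exists_prop]

namespace TransfersPositive

theorem pebblesHom (hρ : TransfersPositive A B ρ) : PebblesHom A B ρ := by
  refine pebblesHom_iff_atoms_transfer.2 ⟨fun i j hA => hρ _ ?_ hA, fun r v hA => hρ _ ?_ hA⟩
  · exact assignedVars_leftEnv ρ ▸ PLFml.freeVars_eq_subset_of_sat hA
  · exact assignedVars_leftEnv ρ ▸ PLFml.freeVars_rel_subset_of_sat hA

theorem exists_update_of_left (hρ : TransfersPositive A B ρ) (p : Fin k) (a : α) :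
    ∃ b : β, TransfersPositive A B (Function.update ρ p (some (a, b))) := by
  by_contra! no_answer
  choose f hf hA hB using fun b => not_transfersPositive_update_iff.1 (no_answer b)
  have vars_subset : (PLFml.ex p (.iand β f)).freeVars ⊆ assignedVars ρ := by
    simpa only [PLFml.freeVars, Set.iUnion_sdiff, Set.iUnion_subset_iff] using hf
  obtain ⟨b, hb⟩ := hρ (.ex p (.iand β f)) vars_subset ⟨a, hA⟩
  exact hB b (hb b)

theorem exists_update_of_right (hρ : TransfersPositive A B ρ) (p : Fin k) (b : β) :
    ∃ a : α, TransfersPositive A B (Function.update ρ p (some (a, b))) := by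
  by_contra! no_answer
  choose f hf hA hB using fun a => not_transfersPositive_update_iff.1 (no_answer a)
  have vars_subset : (PLFml.all p (.ior α f)).freeVars ⊆ assignedVars ρ := by
    simpa only [PLFml.freeVars, Set.iUnion_sdiff, Set.iUnion_subset_iff] using hf
  obtain ⟨a, ha⟩ := hρ (.all p (.ior α f)) vars_subset (fun a => ⟨a, hA a⟩) b
  exact hB a ha

end TransfersPositive

theorem isWinningInvariant_transfersPositive (A : Str V α) (B : Str V β) :
    IsWinningInvariant A B (TransfersPositive A B (k := k)) := fun _ hρ =>
  ⟨hρ.pebblesHom, hρ.exists_update_of_left, hρ.exists_update_of_right⟩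

end PositiveGame

theorem positive_pebble_game_characterisation_general
    (V : Vocab) {α β : Type} (A : Str V α) (B : Str V β) (k : ℕ) :
    (∀ φ : PLFml V k, φ.freeVars = ∅ →
        φ.Sat A (fun _ => none) → φ.Sat B (fun _ => none)) ↔
      PPebWin V A B k := by
  rw [← transfersPositive_none_iff]
  constructor
  · exact fun h => ⟨TransfersPositive A B, h, isWinningInvariant_transfersPositive A B⟩
  · rintro ⟨S, initial, hS⟩ φ -
    exact IsWinningInvariant.sat_imp hS φ initial

/-- every sentence of `⁺L^k` true in `A` is true in `B` if, and only if,
Duplicator has a winning strategy in the positive `k`-pebble game from `A` to `B`.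
(As is standard in first-order model theory, structures are assumed non-empty.) -/
theorem positive_pebble_game_characterisation
    (V : Vocab) [Finite V.Rel] (har : ∀ r : V.Rel, V.ar r ≠ 0)
    {α β : Type} [Nonempty α] [Nonempty β] (A : Str V α) (B : Str V β)
    (k : ℕ) (hk : 0 < k) :
    (∀ φ : PLFml V k, φ.freeVars = ∅ →
        φ.Sat A (fun _ => none) → φ.Sat B (fun _ => none)) ↔
      PPebWin V A B k :=
  positive_pebble_game_characterisation_general V A B k
end

section
/- For all σ-structures A and B and every positive integer k, there exists a positive bisimulation from F_k^I(A) to F_k^I(B) in EM(P_k^I) if, and only if, Duplicator has a winning strategy in the positive k-pebble game from A to B. -/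
/-- An object datum for the Eilenberg–Moore category `EM(P_k^I)` of the pebbling comonad
over `σ^I = σ ∪ {I}`: a `σ`-structure with an interpretation `ieq` of the fresh binary
relation symbol `I`, a (forest) order and a pebbling function. -/
structure PObj (V : Vocab) (k : ℕ) : Type 1 where
  carrier : Type
  rel : ∀ r : V.Rel, (Fin (V.ar r) → carrier) → Prop
  ieq : carrier → carrier → Prop
  le : carrier → carrier → Prop
  peb : carrier → Fin k

namespace PObj

variable {V : Vocab} {k : ℕ}

/-- Gaifman adjacency, with respect to all relations of `σ ∪ {I}`. -/
def Adj (X : PObj V k) (x y : X.carrier) : Prop :=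
  x ≠ y ∧ ((∃ r v, X.rel r v ∧ (∃ i, v i = x) ∧ (∃ j, v j = y)) ∨ X.ieq x y ∨ X.ieq y x)

/-- The covering relation of the order of `X`. -/
def Cover (X : PObj V k) (x y : X.carrier) : Prop :=
  X.le x y ∧ x ≠ y ∧ ∀ z, X.le x z → X.le z y → z = x ∨ z = y

/-- Roots, i.e. minimal elements of the forest order. -/
def IsRoot (X : PObj V k) (x : X.carrier) : Prop := ∀ y, X.le y x → y = x

/-- `X` is (the datum of) a coalgebra for `P_k^I`: a `k`-pebble forest-ordered
`σ^I`-structure. -/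
def IsCoalg (X : PObj V k) : Prop :=
  (∀ x, X.le x x) ∧ (∀ x y z, X.le x y → X.le y z → X.le x z) ∧
  (∀ x y, X.le x y → X.le y x → x = y) ∧
  (∀ x : X.carrier, {y | X.le y x}.Finite ∧
    ∀ y z, X.le y x → X.le z x → X.le y z ∨ X.le z y) ∧
  (∀ x y, X.Adj x y → X.le x y ∨ X.le y x) ∧
  (∀ x y, X.Adj x y → X.le x y → x ≠ y →
    ∀ z, X.le x z → x ≠ z → X.le z y → X.peb x ≠ X.peb z)

/-- Morphisms of `EM(P_k^I)`: homomorphisms of `σ^I`-structures that are forest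
morphisms and preserve the pebbling functions. -/
def IsHom (X Y : PObj V k) (f : X.carrier → Y.carrier) : Prop :=
  (∀ r v, X.rel r v → Y.rel r fun i => f (v i)) ∧
  (∀ x y, X.ieq x y → Y.ieq (f x) (f y)) ∧
  (∀ x, X.IsRoot x → Y.IsRoot (f x)) ∧
  (∀ x y, X.Cover x y → Y.Cover (f x) (f y)) ∧
  (∀ x, Y.peb (f x) = X.peb x)

/-- Embeddings: morphisms that are injective and reflect all relations. -/
def IsEmb (X Y : PObj V k) (f : X.carrier → Y.carrier) : Prop :=
  IsHom X Y f ∧ Function.Injective f ∧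
  (∀ r v, (Y.rel r fun i => f (v i)) → X.rel r v) ∧
  (∀ x y, Y.ieq (f x) (f y) → X.ieq x y)

/-- Paths: objects whose forest order is finite and linear. -/
def IsPath (X : PObj V k) : Prop :=
  Finite X.carrier ∧ ∀ x y : X.carrier, X.le x y ∨ X.le y x

/-- Pathwise embeddings. -/
def IsPWEmb (X Y : PObj V k) (f : X.carrier → Y.carrier) : Prop :=
  IsHom X Y f ∧ ∀ P : PObj V k, IsCoalg P → IsPath P →
    ∀ m : P.carrier → X.carrier, IsEmb P X m → IsEmb P Y fun p => f (m p)

/-- Open morphisms: every commutative square of path embeddings over `f` admits a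
diagonal filler. -/
def IsOpen (X Y : PObj V k) (f : X.carrier → Y.carrier) : Prop :=
  ∀ P Q : PObj V k, IsCoalg P → IsPath P → IsCoalg Q → IsPath Q →
    ∀ (i : P.carrier → Q.carrier) (m : P.carrier → X.carrier)
      (n : Q.carrier → Y.carrier),
      IsEmb P Q i → IsEmb P X m → IsEmb Q Y n → (∀ x, n (i x) = f (m x)) →
      ∃ d : Q.carrier → X.carrier, IsHom Q X d ∧ (∀ x, d (i x) = m x) ∧ ∀ q, f (d q) = n q

end PObj
/-- The co-free coalgebra `F_k^I(A)` for the pebbling comonad on `J(A)`: finite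
non-empty sequences of moves `(p_i, a_i)`, ordered by the prefix order.  A tuple of
sequences is related iff the sequences are pairwise comparable, the pebble index of the
last move of a prefix does not reappear in the corresponding suffix, and the elements of
the last moves are related in `J(A)`; the fresh relation `I` is interpreted accordingly,
with equality of the elements of the last moves. -/
def FP (V : Vocab) (k : ℕ) {α : Type} (A : Str V α) : PObj V k where
  carrier := {l : List (Fin k × α) // l ≠ []}
  rel r v :=
    (∀ i j, (v i).1 <+: (v j).1 ∨ (v j).1 <+: (v i).1) ∧
    (∀ i j w, (v j).1 = (v i).1 ++ w →
      ∀ m ∈ w, m.1 ≠ ((v i).1.getLast (v i).2).1) ∧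
    A.rel r fun i => ((v i).1.getLast (v i).2).2
  ieq s t :=
    ((s.1 <+: t.1) ∨ (t.1 <+: s.1)) ∧
    (∀ w, t.1 = s.1 ++ w → ∀ m ∈ w, m.1 ≠ (s.1.getLast s.2).1) ∧
    (∀ w, s.1 = t.1 ++ w → ∀ m ∈ w, m.1 ≠ (t.1.getLast t.2).1) ∧
    (s.1.getLast s.2).2 = (t.1.getLast t.2).2
  le s t := s.1 <+: t.1
  peb s := (s.1.getLast s.2).1
/-- A positive bisimulation from `X` to `Y` in `EM(P_k^I)`: a diagram
`X ⟵p Z₁ ⟶h Z₂ ⟶q Y` in which `p` and `q` are open pathwise embeddings and `h` is a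
bijective morphism. -/
def PosBisimP (V : Vocab) (k : ℕ) (X Y : PObj V k) : Prop :=
  ∃ Z₁ Z₂ : PObj V k, PObj.IsCoalg Z₁ ∧ PObj.IsCoalg Z₂ ∧
    ∃ (p : Z₁.carrier → X.carrier) (h : Z₁.carrier → Z₂.carrier)
      (q : Z₂.carrier → Y.carrier),
      PObj.IsPWEmb Z₁ X p ∧ PObj.IsOpen Z₁ X p ∧
      PObj.IsHom Z₁ Z₂ h ∧ Function.Bijective h ∧
      PObj.IsPWEmb Z₂ Y q ∧ PObj.IsOpen Z₂ Y q

/-!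
A branch is a finite downward closed chain, i.e. the image of an embedded path. A pathwise embedding
is open if and only if every one-step extension of the image of a branch lifts to a one-step
extension of the branch itself. In `F_k^I(A)` a one-step extension of a branch is an arbitrary move
`(p, a)`, and the relations and `I` see exactly those plays on a branch whose pebble has not been
moved again, i.e. the current position.

Given a positive bisimulation `p`, `h`, `q`, Duplicator follows a branch of `Z₁`: moves of Spoiler
in `A` are lifted along `p` and moves in `B` along `q ∘ h`, which inherits the lifting property
since `h` is bijective. Each position on the branch is a partial homomorphism because `p` reflects
relations on branches while `q ∘ h` preserves them.

Conversely, a winning strategy yields the tree of all sequences of moves `(p, (a, b))` that stay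
within the winning positions. It projects to the plays on `A` and to the plays on `B`. Pulling the
relations back along the first projection gives `Z₁`, along the second `Z₂`; both projections are
open pathwise embeddings, and the identity is a morphism `Z₁ → Z₂` because the positions are partial
homomorphisms.
-/

/-! ### Forest orders and their morphisms -/

namespace PObj

variable {V : Vocab} {k : ℕ} {X Y Z : PObj V k} {f : X.carrier → Y.carrier} {x y z : X.carrier}
  {D : Set X.carrier}

/-- Two elements of a forest order lie on a common branch. -/
def Comparable (X : PObj V k) (x y : X.carrier) : Prop := X.le x y ∨ X.le y x

/-- The elements weakly below `x`. -/
def below (X : PObj V k) (x : X.carrier) : Set X.carrier := {y | X.le y x}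

/-- The elements strictly below `x`. -/
def strictBelow (X : PObj V k) (x : X.carrier) : Set X.carrier := {y | X.le y x ∧ y ≠ x}

/-- A finite, downward closed chain: the image of an embedded path. Every branch is empty or of the
form `X.below x`. -/
structure IsBranch (X : PObj V k) (D : Set X.carrier) : Prop where
  finite : D.Finite
  comparable : ∀ x ∈ D, ∀ y ∈ D, X.Comparable x y
  mem_of_le : ∀ x ∈ D, ∀ y, X.le y x → y ∈ D

/-- The pebble of `x` is not used again on the way from `x` up to `y`. In a coalgebra this holds
for adjacent `x ≤ y`, and it is vacuous unless `x ≤ y`. -/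
def PebbleStays (X : PObj V k) (x y : X.carrier) : Prop :=
  ∀ z, X.le x z → x ≠ z → X.le z y → X.peb x ≠ X.peb z

theorem IsCoalg.refl (hX : X.IsCoalg) (x : X.carrier) : X.le x x := hX.1 x

theorem IsCoalg.trans (hX : X.IsCoalg) (hxy : X.le x y) (hyz : X.le y z) : X.le x z :=
  hX.2.1 x y z hxy hyz

theorem IsCoalg.antisymm (hX : X.IsCoalg) (hxy : X.le x y) (hyx : X.le y x) : x = y :=
  hX.2.2.1 x y hxy hyx

theorem IsCoalg.finite_below (hX : X.IsCoalg) (x : X.carrier) : (X.below x).Finite :=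
  (hX.2.2.2.1 x).1

theorem IsCoalg.comparable_of_le (hX : X.IsCoalg) (hxz : X.le x z) (hyz : X.le y z) :
    X.Comparable x y :=
  (hX.2.2.2.1 z).2 x y hxz hyz

theorem IsCoalg.comparable_of_adj (hX : X.IsCoalg) (hxy : X.Adj x y) : X.Comparable x y :=
  hX.2.2.2.2.1 x y hxy

theorem IsCoalg.pebbleStays_of_adj (hX : X.IsCoalg) (hxy : X.Adj x y) (hle : X.le x y) :
    X.PebbleStays x y :=
  hX.2.2.2.2.2 x y hxy hle hxy.1

theorem IsHom.map_rel (hf : IsHom X Y f) {r : V.Rel} {v : Fin (V.ar r) → X.carrier}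
    (hv : X.rel r v) : Y.rel r fun i => f (v i) :=
  hf.1 r v hv

theorem IsHom.map_ieq (hf : IsHom X Y f) (hxy : X.ieq x y) : Y.ieq (f x) (f y) :=
  hf.2.1 x y hxy

theorem IsHom.comp {g : Y.carrier → Z.carrier} (hg : IsHom Y Z g) (hf : IsHom X Y f) :
    IsHom X Z (g ∘ f) :=
  ⟨fun _ _ hv => hg.map_rel (hf.map_rel hv), fun _ _ hxy => hg.map_ieq (hf.map_ieq hxy),
    fun _ hx => hg.2.2.1 _ (hf.2.2.1 _ hx), fun _ _ hxy => hg.2.2.2.1 _ _ (hf.2.2.2.1 _ _ hxy),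
    fun x => (hg.2.2.2.2 (f x)).trans (hf.2.2.2.2 x)⟩

/-- A forest morphism preserving the pebbling functions, with no condition on the relations. -/
structure IsForestMap (X Y : PObj V k) (f : X.carrier → Y.carrier) : Prop where
  map_isRoot : ∀ {x}, X.IsRoot x → Y.IsRoot (f x)
  map_cover : ∀ {x y}, X.Cover x y → Y.Cover (f x) (f y)
  map_peb : ∀ x, Y.peb (f x) = X.peb x

theorem IsHom.isForestMap (hf : IsHom X Y f) : IsForestMap X Y f :=
  ⟨hf.2.2.1 _, hf.2.2.2.1 _ _, hf.2.2.2.2⟩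

theorem IsForestMap.isHom (hf : IsForestMap X Y f)
    (hrel : ∀ r v, X.rel r v → Y.rel r fun i => f (v i))
    (hieq : ∀ x y, X.ieq x y → Y.ieq (f x) (f y)) : IsHom X Y f :=
  ⟨hrel, hieq, fun _ => hf.map_isRoot, fun _ _ => hf.map_cover, hf.map_peb⟩

theorem IsForestMap.comp {g : Y.carrier → Z.carrier} (hg : IsForestMap Y Z g)
    (hf : IsForestMap X Y f) : IsForestMap X Z (g ∘ f) where
  map_isRoot hx := hg.map_isRoot (hf.map_isRoot hx)
  map_cover hxy := hg.map_cover (hf.map_cover hxy)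
  map_peb x := (hg.map_peb (f x)).trans (hf.map_peb x)

/-- The forest order of a coalgebra, packaged for use with the order library. -/
abbrev IsCoalg.partialOrder (hX : X.IsCoalg) : PartialOrder X.carrier where
  le := X.le
  le_refl := hX.refl
  le_trans _ _ _ := hX.trans
  le_antisymm _ _ := hX.antisymm

theorem IsCoalg.exists_le_cover (hX : X.IsCoalg) (hxy : X.le x y) (hne : x ≠ y) :
    ∃ z, X.le x z ∧ X.Cover z y := by
  let := hX.partialOrder
  have hfin : (X.strictBelow y).Finite := (hX.finite_below y).subset fun z hz => hz.1
  obtain ⟨z, hxz, ⟨hzy, hz⟩, hmax⟩ := hfin.exists_le_maximal ⟨hxy, hne⟩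
  exact ⟨z, hxz, hzy, hz, fun u hzu huy =>
    or_iff_not_imp_right.2 fun hu => hX.antisymm (hmax ⟨huy, hu⟩ hzu) hzu⟩

theorem IsCoalg.wellFounded_strictBelow (hX : X.IsCoalg) :
    WellFounded fun x y => x ∈ X.strictBelow y := by
  refine Subrelation.wf (fun {x y} hxy => ?_) (measure fun x => (X.below x).ncard).wf
  refine Set.ncard_lt_ncard ⟨fun u hu => hX.trans hu hxy.1, fun hsub => ?_⟩ (hX.finite_below y)
  exact hxy.2 (hX.antisymm hxy.1 (hsub (hX.refl y)))

theorem IsCoalg.exists_mem_forall_le (hX : X.IsCoalg) (hfin : D.Finite) (hne : D.Nonempty)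
    (hD : ∀ x ∈ D, ∀ y ∈ D, X.Comparable x y) : ∃ x ∈ D, ∀ y ∈ D, X.le y x := by
  let := hX.partialOrder
  obtain ⟨x, hx, hmax⟩ := hfin.exists_maximal hne
  exact ⟨x, hx, fun y hy => (hD x hx y hy).elim (hmax hy) id⟩

theorem IsForestMap.map_le (hX : X.IsCoalg) (hY : Y.IsCoalg) (hf : IsForestMap X Y f)
    (hxy : X.le x y) : Y.le (f x) (f y) := by
  induction y using hX.wellFounded_strictBelow.induction with
  | _ y ih =>
    by_cases hne : x = y
    · exact hne ▸ hY.refl (f x)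
    · obtain ⟨z, hxz, hzy⟩ := hX.exists_le_cover hxy hne
      exact hY.trans (ih z ⟨hzy.1, hzy.2.1⟩ hxz) (hf.map_cover hzy).1

theorem IsForestMap.map_comparable (hX : X.IsCoalg) (hY : Y.IsCoalg) (hf : IsForestMap X Y f)
    (hxy : X.Comparable x y) : Y.Comparable (f x) (f y) :=
  hxy.imp (hf.map_le hX hY) (hf.map_le hX hY)

theorem IsForestMap.map_ne_of_le (hX : X.IsCoalg) (hY : Y.IsCoalg) (hf : IsForestMap X Y f)
    (hxy : X.le x y) (hne : x ≠ y) : f x ≠ f y := by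
  obtain ⟨z, hxz, hzy⟩ := hX.exists_le_cover hxy hne
  intro heq
  exact (hf.map_cover hzy).2.1
    (hY.antisymm (hf.map_cover hzy).1 (heq ▸ hf.map_le hX hY hxz))

theorem IsForestMap.eq_of_map_eq (hX : X.IsCoalg) (hY : Y.IsCoalg) (hf : IsForestMap X Y f)
    (hxy : X.Comparable x y) (heq : f x = f y) : x = y := by
  by_contra hne
  rcases hxy with hle | hle
  · exact hf.map_ne_of_le hX hY hle hne heq
  · exact hf.map_ne_of_le hX hY hle (Ne.symm hne) heq.symm

theorem IsForestMap.exists_le_map_eq (hX : X.IsCoalg) (hY : Y.IsCoalg) (hf : IsForestMap X Y f)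
    {s : Y.carrier} (hs : Y.le s (f y)) : ∃ x, X.le x y ∧ f x = s := by
  induction y using hX.wellFounded_strictBelow.induction with
  | _ y ih =>
    by_cases hne : s = f y
    · exact ⟨y, hX.refl y, hne.symm⟩
    have hroot : ¬ X.IsRoot y := fun hy => hne (hf.map_isRoot hy s hs)
    obtain ⟨u, huy, hu⟩ : ∃ u, X.le u y ∧ u ≠ y := by
      simpa only [IsRoot, not_forall, exists_prop] using hroot
    obtain ⟨z, -, hzy⟩ := hX.exists_le_cover huy hu
    have hcover := hf.map_cover hzy
    have hsz : Y.le s (f z) := by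
      rcases hY.comparable_of_le hs hcover.1 with hsz | hzs
      · exact hsz
      · rcases hcover.2.2 s hzs hs with rfl | rfl
        · exact hY.refl _
        · exact absurd rfl hne
    obtain ⟨x, hxz, hx⟩ := ih z ⟨hzy.1, hzy.2.1⟩ hsz
    exact ⟨x, hX.trans hxz hzy.1, hx⟩

theorem IsForestMap.image_below (hX : X.IsCoalg) (hY : Y.IsCoalg) (hf : IsForestMap X Y f)
    (x : X.carrier) : f '' X.below x = Y.below (f x) :=
  Set.Subset.antisymm (Set.image_subset_iff.2 fun _ hy => hf.map_le hX hY hy)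
    fun _ hs => hf.exists_le_map_eq hX hY hs

theorem IsForestMap.image_strictBelow (hX : X.IsCoalg) (hY : Y.IsCoalg) (hf : IsForestMap X Y f)
    (x : X.carrier) : f '' X.strictBelow x = Y.strictBelow (f x) := by
  refine Set.Subset.antisymm (Set.image_subset_iff.2 fun y hy =>
    ⟨hf.map_le hX hY hy.1, hf.map_ne_of_le hX hY hy.1 hy.2⟩) ?_
  rintro s ⟨hs, hne⟩
  obtain ⟨y, hyx, rfl⟩ := hf.exists_le_map_eq hX hY hs
  exact ⟨y, ⟨hyx, fun heq => hne (congrArg f heq)⟩, rfl⟩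

theorem isForestMap_of_image_strictBelow (hX : X.IsCoalg) (hY : Y.IsCoalg)
    (hpeb : ∀ x, Y.peb (f x) = X.peb x)
    (hbelow : ∀ x, f '' X.strictBelow x = Y.strictBelow (f x)) : IsForestMap X Y f := by
  have map_lt : ∀ {x y}, X.le x y → x ≠ y → f x ∈ Y.strictBelow (f y) := fun {x y} hxy hne =>
    hbelow y ▸ Set.mem_image_of_mem f ⟨hxy, hne⟩
  refine ⟨fun {x} hx s hs => ?_, fun {x y} hxy => ?_, hpeb⟩
  · by_contra hne
    obtain ⟨y, hy, -⟩ := (hbelow x).symm ▸ (show s ∈ Y.strictBelow (f x) from ⟨hs, hne⟩)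
    exact hy.2 (hx y hy.1)
  · refine ⟨(map_lt hxy.1 hxy.2.1).1, (map_lt hxy.1 hxy.2.1).2, fun s hxs hsy => ?_⟩
    by_contra! hne
    obtain ⟨u, ⟨huy, hu⟩, rfl⟩ :=
      (hbelow y).symm ▸ (show s ∈ Y.strictBelow (f y) from ⟨hsy, hne.2⟩)
    have hux : u ≠ x := fun heq => hne.1 (congrArg f heq)
    rcases hX.comparable_of_le huy hxy.1 with hle | hle
    · exact hne.1 (hY.antisymm (map_lt hle hux).1 hxs)
    · exact (hxy.2.2 u hle huy).elim hux hu

theorem IsForestMap.pebbleStays_map_iff (hX : X.IsCoalg) (hY : Y.IsCoalg) (hf : IsForestMap X Y f)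
    (hxy : X.Comparable x y) : Y.PebbleStays (f x) (f y) ↔ X.PebbleStays x y := by
  constructor
  · intro hstay z hxz hne hzy
    rw [← hf.map_peb x, ← hf.map_peb z]
    exact hstay _ (hf.map_le hX hY hxz) (hf.map_ne_of_le hX hY hxz hne) (hf.map_le hX hY hzy)
  · intro hstay s hxs hne hsy
    obtain ⟨z, hzy, rfl⟩ := hf.exists_le_map_eq hX hY hsy
    have hxz : X.le x z := by
      have hxy' : X.le x y := hxy.elim id fun hyx => by
        have : f x = f y := hY.antisymm (hY.trans hxs hsy) (hf.map_le hX hY hyx)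
        exact hf.eq_of_map_eq hX hY hxy this ▸ hX.refl x
      refine (hX.comparable_of_le hxy' hzy).elim id fun hzx => ?_
      exact absurd (hY.antisymm hxs (hf.map_le hX hY hzx)) hne
    rw [hf.map_peb, hf.map_peb]
    exact hstay z hxz (fun heq => hne (congrArg f heq)) hzy

theorem IsCoalg.pebbleStays_self (hX : X.IsCoalg) (x : X.carrier) : X.PebbleStays x x :=
  fun _ hxz hne hzx => absurd (hX.antisymm hxz hzx) hne

/-! ### Branches -/

theorem IsCoalg.isBranch_below (hX : X.IsCoalg) (x : X.carrier) : X.IsBranch (X.below x) where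
  finite := hX.finite_below x
  comparable _ hy _ hz := hX.comparable_of_le hy hz
  mem_of_le _ hy _ hzy := hX.trans hzy hy

theorem IsCoalg.isBranch_strictBelow (hX : X.IsCoalg) (x : X.carrier) :
    X.IsBranch (X.strictBelow x) where
  finite := (hX.finite_below x).subset fun _ hy => hy.1
  comparable _ hy _ hz := hX.comparable_of_le hy.1 hz.1
  mem_of_le _ hy _ hzy :=
    ⟨hX.trans hzy hy.1, fun heq => hy.2 (hX.antisymm hy.1 (heq ▸ hzy))⟩

theorem IsBranch.eq_empty_or_eq_below (hX : X.IsCoalg) (hD : X.IsBranch D) :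
    D = ∅ ∨ ∃ x, D = X.below x := by
  refine D.eq_empty_or_nonempty.imp_right fun hne => ?_
  obtain ⟨x, hx, htop⟩ := hX.exists_mem_forall_le hD.finite hne hD.comparable
  exact ⟨x, Set.Subset.antisymm htop fun y hy => hD.mem_of_le x hx y hy⟩

theorem IsForestMap.isBranch_image (hX : X.IsCoalg) (hY : Y.IsCoalg) (hf : IsForestMap X Y f)
    (hD : X.IsBranch D) : Y.IsBranch (f '' D) := by
  refine ⟨hD.finite.image f, ?_, ?_⟩
  · rintro _ ⟨x, hx, rfl⟩ _ ⟨y, hy, rfl⟩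
    exact hf.map_comparable hX hY (hD.comparable x hx y hy)
  · rintro _ ⟨x, hx, rfl⟩ s hs
    obtain ⟨y, hyx, rfl⟩ := hf.exists_le_map_eq hX hY hs
    exact ⟨y, hD.mem_of_le x hx y hyx, rfl⟩

theorem IsForestMap.isBranch_range (hX : X.IsCoalg) (hY : Y.IsCoalg) (hf : IsForestMap X Y f)
    (hpath : X.IsPath) : Y.IsBranch (Set.range f) := by
  have := hpath.1
  rw [← Set.image_univ]
  exact hf.isBranch_image hX hY
    ⟨Set.finite_univ, fun x _ y _ => hpath.2 x y, fun _ _ _ _ => trivial⟩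

theorem IsForestMap.injOn_of_isBranch (hX : X.IsCoalg) (hY : Y.IsCoalg) (hf : IsForestMap X Y f)
    (hD : X.IsBranch D) : Set.InjOn f D :=
  fun x hx y hy => hf.eq_of_map_eq hX hY (hD.comparable x hx y hy)

theorem Adj.map (hrel : ∀ r v, X.rel r v → Y.rel r fun i => f (v i))
    (hieq : ∀ x y, X.ieq x y → Y.ieq (f x) (f y)) (hxy : X.Adj x y) (hne : f x ≠ f y) :
    Y.Adj (f x) (f y) := by
  refine ⟨hne, ?_⟩
  rcases hxy.2 with ⟨r, v, hv, ⟨i, rfl⟩, ⟨j, rfl⟩⟩ | hxy | hyx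
  · exact Or.inl ⟨r, _, hrel r v hv, ⟨i, rfl⟩, ⟨j, rfl⟩⟩
  · exact Or.inr (Or.inl (hieq x y hxy))
  · exact Or.inr (Or.inr (hieq y x hyx))

/-- The substructure of `X` on a set of elements, with the order and the pebbling of `X`. -/
abbrev restrict (X : PObj V k) (D : Set X.carrier) : PObj V k where
  carrier := D
  rel r v := X.rel r fun i => (v i).1
  ieq x y := X.ieq x.1 y.1
  le x y := X.le x.1 y.1
  peb x := X.peb x.1

theorem IsCoalg.restrict (hX : X.IsCoalg) (D : Set X.carrier) : (X.restrict D).IsCoalg := by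
  have adj_val : ∀ x y : D, (X.restrict D).Adj x y → X.Adj x.1 y.1 := fun x y hxy =>
    Adj.map (X := X.restrict D) (fun _ _ hv => hv) (fun _ _ hxy => hxy) hxy
      (Subtype.coe_ne_coe.2 hxy.1)
  refine ⟨fun x => hX.refl x.1, fun x y z => hX.trans,
    fun x y hxy hyx => Subtype.ext (hX.antisymm hxy hyx),
    fun x => ⟨(hX.finite_below x.1).preimage Subtype.val_injective.injOn,
      fun y z => hX.comparable_of_le⟩,
    fun x y hxy => hX.comparable_of_adj (adj_val x y hxy),
    fun x y hxy hle _ z hxz hne => hX.pebbleStays_of_adj (adj_val x y hxy) hle z.1 hxz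
      (Subtype.coe_ne_coe.2 hne)⟩

theorem image_val_strictBelow_restrict (hD : ∀ x ∈ D, ∀ y, X.le y x → y ∈ D) (x : D) :
    Subtype.val '' (X.restrict D).strictBelow x = X.strictBelow x.1 := by
  refine Set.Subset.antisymm
    (Set.image_subset_iff.2 fun y hy => ⟨hy.1, Subtype.coe_ne_coe.2 hy.2⟩) fun y hy => ?_
  exact ⟨⟨y, hD x.1 x.2 y hy.1⟩, ⟨hy.1, fun heq => hy.2 (congrArg Subtype.val heq)⟩, rfl⟩

theorem isEmb_val_restrict (hX : X.IsCoalg) (hD : ∀ x ∈ D, ∀ y, X.le y x → y ∈ D) :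
    IsEmb (X.restrict D) X Subtype.val :=
  ⟨(isForestMap_of_image_strictBelow (hX.restrict D) hX (fun _ => rfl)
      (image_val_strictBelow_restrict hD)).isHom (fun _ _ hv => hv) (fun _ _ hxy => hxy),
    Subtype.val_injective, fun _ _ hv => hv, fun _ _ hxy => hxy⟩

theorem IsEmb.codRestrict (hX : X.IsCoalg) (hY : Y.IsCoalg) (hf : IsEmb X Y f)
    {E : Set Y.carrier} (hE : ∀ s ∈ E, ∀ t, Y.le t s → t ∈ E) (hmem : ∀ x, f x ∈ E) :
    IsEmb X (Y.restrict E) (Set.codRestrict f E hmem) := by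
  have hforest := hf.1.isForestMap
  refine ⟨(isForestMap_of_image_strictBelow hX (hY.restrict E) hforest.map_peb fun x =>
    Subtype.val_injective.image_injective ?_).isHom hf.1.1 hf.1.2.1,
    hf.2.1.codRestrict hmem, hf.2.2.1, hf.2.2.2⟩
  rw [image_val_strictBelow_restrict hE, Set.image_image]
  exact hforest.image_strictBelow hX hY x

theorem IsBranch.isPath_restrict (hD : X.IsBranch D) : (X.restrict D).IsPath :=
  ⟨hD.finite.to_subtype, fun x y => hD.comparable x.1 x.2 y.1 y.2⟩

theorem IsPWEmb.isEmb_restrict (hX : X.IsCoalg) (hf : IsPWEmb X Y f) (hD : X.IsBranch D) :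
    IsEmb (X.restrict D) Y fun x => f x.1 :=
  hf.2 _ (hX.restrict D) hD.isPath_restrict _ (isEmb_val_restrict hX hD.mem_of_le)

theorem IsPWEmb.rel_of_map (hX : X.IsCoalg) (hf : IsPWEmb X Y f) (hD : X.IsBranch D) {r : V.Rel}
    {v : Fin (V.ar r) → X.carrier} (hmem : ∀ i, v i ∈ D) (hv : Y.rel r fun i => f (v i)) :
    X.rel r v :=
  (hf.isEmb_restrict hX hD).2.2.1 r (fun i => ⟨v i, hmem i⟩) hv

theorem IsPWEmb.ieq_of_map (hX : X.IsCoalg) (hf : IsPWEmb X Y f) (hD : X.IsBranch D)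
    (hx : x ∈ D) (hy : y ∈ D) (hxy : Y.ieq (f x) (f y)) : X.ieq x y :=
  (hf.isEmb_restrict hX hD).2.2.2 ⟨x, hx⟩ ⟨y, hy⟩ hxy

/-! ### Open pathwise embeddings -/

/-- Every one-step extension of the image of a branch lifts to a one-step extension of that
branch. For pathwise embeddings this is openness, with path embeddings replaced by branches. -/
def HasStepLifting (X Y : PObj V k) (f : X.carrier → Y.carrier) : Prop :=
  ∀ D, X.IsBranch D → ∀ t, Y.strictBelow t = f '' D → ∃ z, X.strictBelow z = D ∧ f z = t

theorem IsOpen.hasStepLifting (hX : X.IsCoalg) (hY : Y.IsCoalg) (hf : IsPWEmb X Y f)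
    (hopen : IsOpen X Y f) : HasStepLifting X Y f := by
  intro D hD t ht
  have hmem : ∀ x : (X.restrict D).carrier, f x.1 ∈ Y.below t := fun x =>
    (ht.symm ▸ Set.mem_image_of_mem f x.2 : f x.1 ∈ Y.strictBelow t).1
  have hE := hY.isBranch_below t
  let i := Set.codRestrict (fun x : (X.restrict D).carrier => f x.1) (Y.below t) hmem
  have hi : IsEmb (X.restrict D) (Y.restrict (Y.below t)) i :=
    (hf.isEmb_restrict hX hD).codRestrict (hX.restrict D) hY hE.mem_of_le hmem
  obtain ⟨d, hd, hdi, hfd⟩ := hopen _ _ (hX.restrict D) hD.isPath_restrict (hY.restrict _)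
    hE.isPath_restrict i Subtype.val Subtype.val hi (isEmb_val_restrict hX hD.mem_of_le)
    (isEmb_val_restrict hY hE.mem_of_le) fun _ => rfl
  let top : (Y.restrict (Y.below t)).carrier := ⟨t, hY.refl t⟩
  have hrange : (Y.restrict (Y.below t)).strictBelow top = Set.range i := by
    apply Subtype.val_injective.image_injective
    rw [image_val_strictBelow_restrict hE.mem_of_le, ← Set.range_comp]
    exact ht.trans (Set.image_eq_range f D)
  refine ⟨d top, ?_, hfd top⟩
  calc X.strictBelow (d top) = d '' Set.range i := by
        rw [← hrange, hd.isForestMap.image_strictBelow (hY.restrict _) hX]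
    _ = Set.range (Subtype.val : D → X.carrier) := by
        rw [← Set.range_comp, show d ∘ i = Subtype.val from funext hdi]
    _ = D := Subtype.range_coe

theorem HasStepLifting.exists_isBranch_image_eq (hX : X.IsCoalg) (hY : Y.IsCoalg)
    (hf : IsForestMap X Y f) (hstep : HasStepLifting X Y f) (hD : X.IsBranch D) {E : Set Y.carrier}
    (hE : Y.IsBranch E) (hDE : f '' D ⊆ E) : ∃ D', X.IsBranch D' ∧ D ⊆ D' ∧ f '' D' = E := by
  rcases hE.eq_empty_or_eq_below hY with rfl | ⟨t, rfl⟩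
  · exact ⟨D, hD, Set.Subset.rfl, Set.subset_empty_iff.1 hDE⟩
  clear hE
  induction t using hY.wellFounded_strictBelow.induction with
  | _ t ih =>
    by_cases ht : t ∈ f '' D
    · exact ⟨D, hD, Set.Subset.rfl, hDE.antisymm fun s hs =>
        (hf.isBranch_image hX hY hD).mem_of_le t ht s hs⟩
    have hDt : f '' D ⊆ Y.strictBelow t := fun s hs => ⟨hDE hs, fun heq => ht (heq ▸ hs)⟩
    obtain ⟨D₁, hD₁, hsub, himage⟩ : ∃ D₁, X.IsBranch D₁ ∧ D ⊆ D₁ ∧ f '' D₁ = Y.strictBelow t := by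
      rcases (hY.isBranch_strictBelow t).eq_empty_or_eq_below hY with hempty | ⟨s, hs⟩
      · exact ⟨D, hD, Set.Subset.rfl, by rw [hempty, ← Set.subset_empty_iff, ← hempty]; exact hDt⟩
      · rw [hs] at hDt ⊢
        exact ih s (hs ▸ hY.refl s : s ∈ Y.strictBelow t) hDt
    obtain ⟨z, rfl, rfl⟩ := hstep D₁ hD₁ t himage.symm
    exact ⟨X.below z, hX.isBranch_below z, fun x hx => (hsub hx).1, hf.image_below hX hY z⟩

theorem HasStepLifting.isOpen (hX : X.IsCoalg) (hY : Y.IsCoalg) (hf : IsPWEmb X Y f)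
    (hstep : HasStepLifting X Y f) : IsOpen X Y f := by
  intro P Q hP hPpath hQ hQpath i m n _ hm hn hcomm
  have hforest := hf.1.isForestMap
  have hnforest := hn.1.isForestMap
  obtain ⟨D, hD, hmD, hfD⟩ : ∃ D, X.IsBranch D ∧ Set.range m ⊆ D ∧ f '' D = Set.range n := by
    refine hstep.exists_isBranch_image_eq hX hY hforest
      (hm.1.isForestMap.isBranch_range hP hX hPpath) (hnforest.isBranch_range hQ hY hQpath) ?_
    rintro _ ⟨_, ⟨x, rfl⟩, rfl⟩
    exact ⟨i x, hcomm x⟩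
  have hinj := hforest.injOn_of_isBranch hX hY hD
  have hlift : ∀ q, ∃ x ∈ D, f x = n q := fun q =>
    (Set.ext_iff.1 hfD (n q)).2 (Set.mem_range_self q)
  choose d hdD hfd using hlift
  have hd : IsForestMap Q X d := by
    refine isForestMap_of_image_strictBelow hQ hX (fun q => ?_) fun q => ?_
    · rw [← hforest.map_peb, hfd, hnforest.map_peb]
    · refine (hinj.image_eq_image_iff (Set.image_subset_iff.2 fun q' _ => hdD q')
        fun x hx => hD.mem_of_le _ (hdD q) x hx.1).1 ?_
      simp only [Set.image_image, hfd, hforest.image_strictBelow hX hY]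
      exact hnforest.image_strictBelow hQ hY q
  refine ⟨d, hd.isHom (fun r v hv => ?_) (fun x y hxy => ?_), fun x => ?_, hfd⟩
  · refine hf.rel_of_map hX hD (fun i => hdD (v i)) ?_
    simpa only [hfd] using hn.1.map_rel hv
  · refine hf.ieq_of_map hX hD (hdD x) (hdD y) ?_
    simpa only [hfd] using hn.1.map_ieq hxy
  · exact hinj (hdD (i x)) (hmD ⟨x, rfl⟩) ((hfd (i x)).trans (hcomm x))

theorem HasStepLifting.comp_bijective {h : X.carrier → Y.carrier} {g : Y.carrier → Z.carrier}
    (hX : X.IsCoalg) (hY : Y.IsCoalg) (hg : HasStepLifting Y Z g) (hh : IsForestMap X Y h)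
    (hbij : Function.Bijective h) : HasStepLifting X Z (g ∘ h) := by
  intro D hD t ht
  obtain ⟨y, hy, rfl⟩ := hg (h '' D) (hh.isBranch_image hX hY hD) t (by rw [ht, Set.image_comp])
  obtain ⟨x, rfl⟩ := hbij.2 y
  exact ⟨x, hbij.1.image_injective ((hh.image_strictBelow hX hY x).trans hy), rfl⟩

/-- The forest `X` with the relations pulled back along `f`, restricted to chains of `X` so that
the result is again a coalgebra. The relations of `X` itself are discarded. -/
abbrev induced (X Y : PObj V k) (f : X.carrier → Y.carrier) : PObj V k where
  carrier := X.carrier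
  rel r v := (∀ i j, X.Comparable (v i) (v j)) ∧ Y.rel r fun i => f (v i)
  ieq x y := X.Comparable x y ∧ Y.ieq (f x) (f y)
  le := X.le
  peb := X.peb

theorem IsForestMap.isCoalg_induced (hX : X.IsCoalg) (hY : Y.IsCoalg) (hf : IsForestMap X Y f) :
    (X.induced Y f).IsCoalg := by
  have comparable_of_adj : ∀ x y, (X.induced Y f).Adj x y → X.Comparable x y := by
    rintro x y ⟨-, ⟨r, v, hv, ⟨i, rfl⟩, ⟨j, rfl⟩⟩ | hxy | hyx⟩
    exacts [hv.1 i j, hxy.1, hyx.1.symm]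
  refine ⟨fun _ => hX.refl _, fun _ _ _ => hX.trans, fun _ _ => hX.antisymm,
    fun x => ⟨hX.finite_below x, fun _ _ => hX.comparable_of_le⟩, comparable_of_adj,
    fun (x y : X.carrier) hxy (hle : X.le x y) _ => ?_⟩
  have hadj : Y.Adj (f x) (f y) :=
    Adj.map (X := X.induced Y f) (fun _ _ hv => hv.2) (fun _ _ hxy => hxy.2) hxy
      (hf.map_ne_of_le hX hY hle hxy.1)
  exact (hf.pebbleStays_map_iff hX hY (Or.inl hle)).1
    (hY.pebbleStays_of_adj hadj (hf.map_le hX hY hle))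

theorem IsForestMap.isPWEmb_induced (hX : X.IsCoalg) (hY : Y.IsCoalg) (hf : IsForestMap X Y f) :
    IsPWEmb (X.induced Y f) Y f := by
  have hf' : IsHom (X.induced Y f) Y f :=
    ⟨fun _ _ hv => hv.2, fun _ _ hxy => hxy.2, fun _ => hf.map_isRoot, fun _ _ => hf.map_cover,
      hf.map_peb⟩
  refine ⟨hf', fun P hP hPpath m hm => ?_⟩
  have hind := hf.isCoalg_induced hX hY
  have hcomp : ∀ a b, (X.induced Y f).Comparable (m a) (m b) := fun a b =>
    hm.1.isForestMap.map_comparable hP hind (hPpath.2 a b)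
  exact ⟨hf'.comp hm.1,
    fun a b hab => hm.2.1 (hf'.isForestMap.eq_of_map_eq hind hY (hcomp a b) hab),
    fun r v hv => hm.2.2.1 r v ⟨fun i j => hcomp (v i) (v j), hv⟩,
    fun a b hab => hm.2.2.2 a b ⟨hcomp a b, hab⟩⟩

theorem HasStepLifting.induced (hstep : HasStepLifting X Y f) :
    HasStepLifting (X.induced Y f) Y f :=
  fun D hD => hstep D ⟨hD.finite, hD.comparable, hD.mem_of_le⟩

end PObj

/-! ### The co-free coalgebras -/

/-- Non-empty sequences of moves: the carrier of `FP V k A`, which depends only on the carrier of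
`A`. -/
abbrev Play (k : ℕ) (α : Type) : Type := {l : List (Fin k × α) // l ≠ []}

namespace Play

open PObj

variable {V : Vocab} {k : ℕ} {α : Type} {A : Str V α} {x y : Play k α}

/-- The element chosen in the last move of a play, i.e. the counit of the pebbling comonad. -/
def value (x : Play k α) : α := (x.1.getLast x.2).2

/-- The play that continues the possibly empty sequence `l` with the move `m`. -/
def snoc (l : List (Fin k × α)) (m : Fin k × α) : Play k α := ⟨l ++ [m], by simp⟩

/-- The plays that are prefixes of the possibly empty sequence `l`. -/
def prefixes (l : List (Fin k × α)) : Set (Play k α) := {x | x.1 <+: l}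

theorem exists_eq_snoc (x : Play k α) : ∃ l m, x = snoc l m :=
  ⟨_, _, Subtype.ext (List.dropLast_append_getLast x.2).symm⟩

theorem value_snoc (l : List (Fin k × α)) (m : Fin k × α) : (snoc l m).value = m.2 := by
  simp [value, snoc]

theorem peb_snoc (A : Str V α) (l : List (Fin k × α)) (m : Fin k × α) :
    (FP V k A).peb (snoc l m) = m.1 := by
  simp [FP, snoc]

theorem strictBelow_snoc (A : Str V α) (l : List (Fin k × α)) (m : Fin k × α) :
    (FP V k A).strictBelow (snoc l m) = prefixes l := by
  refine Set.ext fun (x : Play k α) => ⟨fun ⟨hle, hne⟩ => ?_, fun hx => ⟨?_, ?_⟩⟩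
  · exact (List.prefix_concat_iff.1 hle).resolve_left fun heq => hne (Subtype.ext heq)
  · exact List.prefix_concat_iff.2 (Or.inr hx)
  · rintro rfl
    simpa [snoc] using hx.length_le

theorem pebbleStays_iff : (FP V k A).PebbleStays x y ↔
    ∀ w, y.1 = x.1 ++ w → ∀ m ∈ w, m.1 ≠ (x.1.getLast x.2).1 := by
  constructor
  · intro hstay w hw m hm
    obtain ⟨s, t, rfl⟩ := List.append_of_mem hm
    have hpeb := hstay (snoc (x.1 ++ s) m) ⟨s ++ [m], by simp [snoc]⟩
      (fun heq => by simpa [snoc] using congrArg (List.length ∘ Subtype.val) heq)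
      ⟨t, by simp [snoc, hw]⟩
    rw [peb_snoc] at hpeb
    exact hpeb.symm
  · rintro hstay z ⟨s, hs⟩ hne ⟨t, ht⟩
    have hs_ne : s ≠ [] := fun hnil => hne (Subtype.ext (by simpa [hnil] using hs))
    have hlast : z.1.getLast z.2 = s.getLast hs_ne := by
      simp only [← hs, List.getLast_append_of_ne_nil _ hs_ne]
    have hmem : z.1.getLast z.2 ∈ s ++ t :=
      hlast ▸ List.mem_append_left t (List.getLast_mem hs_ne)
    exact (hstay (s ++ t) (by rw [← ht, ← hs, List.append_assoc]) _ hmem).symm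

theorem rel_iff {r : V.Rel} {v : Fin (V.ar r) → Play k α} : (FP V k A).rel r v ↔
    (∀ i j, (FP V k A).Comparable (v i) (v j)) ∧ (∀ i j, (FP V k A).PebbleStays (v i) (v j)) ∧
      A.rel r fun i => (v i).value := by
  simp only [pebbleStays_iff]
  rfl

theorem ieq_iff : (FP V k A).ieq x y ↔ (FP V k A).Comparable x y ∧
    (FP V k A).PebbleStays x y ∧ (FP V k A).PebbleStays y x ∧ x.value = y.value := by
  simp only [pebbleStays_iff]
  rfl

theorem isCoalg (A : Str V α) : (FP V k A).IsCoalg := by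
  have of_adj : ∀ x y, (FP V k A).Adj x y →
      (FP V k A).Comparable x y ∧ (FP V k A).PebbleStays x y := by
    rintro x y ⟨-, ⟨r, v, hv, ⟨i, rfl⟩, ⟨j, rfl⟩⟩ | hxy | hyx⟩
    · exact ⟨(rel_iff.1 hv).1 i j, (rel_iff.1 hv).2.1 i j⟩
    · exact ⟨(ieq_iff.1 hxy).1, (ieq_iff.1 hxy).2.1⟩
    · exact ⟨(ieq_iff.1 hyx).1.symm, (ieq_iff.1 hyx).2.2.1⟩
  refine ⟨fun x => List.prefix_rfl, fun x y z => List.IsPrefix.trans,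
    fun x y hxy hyx => Subtype.ext (hxy.eq_of_length_le hyx.length_le),
    fun x => ⟨?_, fun y z => List.prefix_or_prefix_of_prefix⟩,
    fun x y hxy => (of_adj x y hxy).1, fun x y hxy _ _ => (of_adj x y hxy).2⟩
  refine Set.Finite.of_finite_image (f := Subtype.val) ?_ Subtype.val_injective.injOn
  refine (List.finite_toSet x.1.inits).subset (Set.image_subset_iff.2 fun y hy => ?_)
  exact (List.mem_inits _ _).2 hy

theorem exists_eq_prefixes {E : Set (Play k α)} (hE : (FP V k A).IsBranch E) :
    ∃ l, E = prefixes l := by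
  rcases hE.eq_empty_or_eq_below (isCoalg A) with rfl | ⟨x, rfl⟩
  · exact ⟨[], (Set.eq_empty_of_forall_notMem fun x hx => x.2 (List.prefix_nil.1 hx)).symm⟩
  · exact ⟨x.1, rfl⟩

theorem prefixes_injective : Function.Injective (prefixes : List (Fin k × α) → Set (Play k α)) := by
  have prefix_of_subset : ∀ {l l' : List (Fin k × α)}, prefixes l ⊆ prefixes l' → l <+: l' := by
    intro l l' hsub
    by_cases hl : l = []
    · exact hl ▸ List.nil_prefix
    · exact hsub (show (⟨l, hl⟩ : Play k α) ∈ prefixes l from List.prefix_rfl)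
  intro l l' heq
  exact (prefix_of_subset heq.subset).eq_of_length_le (prefix_of_subset heq.superset).length_le

theorem exists_strictBelow_eq_of_hasStepLifting {Z : PObj V k} {f : Z.carrier → Play k α}
    (hZ : Z.IsCoalg) (hf : IsForestMap Z (FP V k A) f) (hstep : HasStepLifting Z (FP V k A) f)
    {D : Set Z.carrier} (hD : Z.IsBranch D) (i : Fin k) (a : α) :
    ∃ z, Z.strictBelow z = D ∧ Z.peb z = i ∧ (f z).value = a := by
  obtain ⟨l, hl⟩ := exists_eq_prefixes (hf.isBranch_image hZ (isCoalg A) hD)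
  obtain ⟨z, hz, hfz⟩ := hstep D hD (snoc l (i, a)) ((strictBelow_snoc A l _).trans hl.symm)
  exact ⟨z, hz, by rw [← hf.map_peb, hfz, peb_snoc], by rw [hfz, value_snoc]⟩

end Play

/-! ### From a bisimulation to a winning strategy -/

namespace PObj

open Play

variable {V : Vocab} {k : ℕ} {α β γ : Type} {Z : PObj V k} {D : Set Z.carrier} {lbl : Z.carrier → γ}
  {ρ : Fin k → Option γ}

/-- The position `ρ` is reached along the branch `D` when `w` stands for the move that puts the
pebble `Z.peb w` on `lbl w`: every placed pebble was put there by some `w` in `D` and not moved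
since. Pebbles may be missing from `ρ`. -/
def Records (Z : PObj V k) (D : Set Z.carrier) (lbl : Z.carrier → γ) (ρ : Fin k → Option γ) :
    Prop :=
  ∀ i c, ρ i = some c → ∃ w ∈ D, Z.peb w = i ∧ lbl w = c ∧ ∀ u ∈ D, Z.PebbleStays w u

theorem Records.update (hZ : Z.IsCoalg) {z : Z.carrier}
    (hρ : Records Z (Z.strictBelow z) lbl ρ) :
    Records Z (Z.below z) lbl (Function.update ρ (Z.peb z) (some (lbl z))) := by
  intro i c hic
  by_cases hi : i = Z.peb z
  · subst hi
    rw [Function.update_self, Option.some_inj] at hic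
    exact ⟨z, hZ.refl z, rfl, hic, fun u huz v hzv hne hvu =>
      absurd (hZ.antisymm hzv (hZ.trans hvu huz)) hne⟩
  · rw [Function.update_of_ne hi] at hic
    obtain ⟨w, hw, rfl, hlbl, hstay⟩ := hρ i c hic
    refine ⟨w, hw.1, rfl, hlbl, fun u huz v hwv hne hvu => ?_⟩
    by_cases hvz : v = z
    · exact hvz ▸ hi
    · have hv : v ∈ Z.strictBelow z := ⟨hZ.trans hvu huz, hvz⟩
      exact hstay v hv v hwv hne (hZ.refl v)

theorem Records.pebblesHom {A : Str V α} {B : Str V β} {p : Z.carrier → Play k α}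
    {e : Z.carrier → Play k β} {ρ : Fin k → Option (α × β)} (hZ : Z.IsCoalg)
    (hp : IsPWEmb Z (FP V k A) p) (he : IsHom Z (FP V k B) e) (hD : Z.IsBranch D)
    (hρ : Records Z D (fun w => ((p w).value, (e w).value)) ρ) : PebblesHom A B ρ := by
  have hforest := hp.1.isForestMap
  have comparable_map : ∀ w ∈ D, ∀ u ∈ D, (FP V k A).Comparable (p w) (p u) := fun w hw u hu =>
    hforest.map_comparable hZ (isCoalg A) (hD.comparable w hw u hu)
  have pebbleStays_map : ∀ w ∈ D, ∀ u ∈ D, Z.PebbleStays w u →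
      (FP V k A).PebbleStays (p w) (p u) := fun w hw u hu =>
    (hforest.pebbleStays_map_iff hZ (isCoalg A) (hD.comparable w hw u hu)).2
  constructor
  · intro i j a a' b b' hi hj haa'
    obtain ⟨w, hw, -, hwval, hwstay⟩ := hρ i _ hi
    obtain ⟨u, hu, -, huval, hustay⟩ := hρ j _ hj
    simp only [Prod.mk.injEq] at hwval huval
    have hA : (FP V k A).ieq (p w) (p u) := ieq_iff.2
      ⟨comparable_map w hw u hu, pebbleStays_map w hw u hu (hwstay u hu),
        pebbleStays_map u hu w hw (hustay w hw), by rw [hwval.1, huval.1, haa']⟩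
    have hB := he.map_ieq (hp.ieq_of_map hZ hD hw hu hA)
    rw [← hwval.2, ← huval.2]
    exact (ieq_iff.1 hB).2.2.2
  · intro r v g hg hrel
    choose w hw _ hval hstay using fun t => hρ (v t) (g t) (hg t)
    simp only [← hval] at hrel ⊢
    have hA : (FP V k A).rel r fun t => p (w t) := rel_iff.2
      ⟨fun s t => comparable_map _ (hw s) _ (hw t),
        fun s t => pebbleStays_map _ (hw s) _ (hw t) (hstay s _ (hw t)), hrel⟩
    exact (rel_iff.1 (he.map_rel (hp.rel_of_map hZ hD hw hA))).2.2

theorem pPebWin_of_hasStepLifting {A : Str V α} {B : Str V β} {p : Z.carrier → Play k α}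
    {e : Z.carrier → Play k β} (hZ : Z.IsCoalg)
    (hp : IsPWEmb Z (FP V k A) p) (hpstep : HasStepLifting Z (FP V k A) p)
    (he : IsHom Z (FP V k B) e) (hestep : HasStepLifting Z (FP V k B) e) : PPebWin V A B k := by
  let lbl : Z.carrier → α × β := fun w => ((p w).value, (e w).value)
  refine ⟨fun ρ => ∃ D, Z.IsBranch D ∧ Records Z D lbl ρ,
    ⟨∅, ⟨Set.finite_empty, by simp, by simp⟩, by simp [Records]⟩, ?_⟩
  rintro ρ ⟨D, hD, hρ⟩
  refine ⟨hρ.pebblesHom hZ hp he hD, fun i a => ?_, fun i b => ?_⟩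
  · obtain ⟨z, rfl, rfl, rfl⟩ :=
      exists_strictBelow_eq_of_hasStepLifting hZ hp.1.isForestMap hpstep hD i a
    exact ⟨(e z).value, Z.below z, hZ.isBranch_below z, hρ.update hZ⟩
  · obtain ⟨z, rfl, rfl, rfl⟩ :=
      exists_strictBelow_eq_of_hasStepLifting hZ he.isForestMap hestep hD i b
    exact ⟨(p z).value, Z.below z, hZ.isBranch_below z, hρ.update hZ⟩

end PObj

theorem PosBisimP.pPebWin {V : Vocab} {k : ℕ} {α β : Type} {A : Str V α} {B : Str V β}
    (hbisim : PosBisimP V k (FP V k A) (FP V k B)) : PPebWin V A B k := by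
  obtain ⟨Z₁, Z₂, hZ₁, hZ₂, p, h, q, hp, hpopen, hh, hbij, hq, hqopen⟩ := hbisim
  have hqstep := hqopen.hasStepLifting hZ₂ (Play.isCoalg B) hq
  exact PObj.pPebWin_of_hasStepLifting hZ₁ hp (hpopen.hasStepLifting hZ₁ (Play.isCoalg A) hp)
    (hq.1.comp hh) (hqstep.comp_bijective hZ₁ hZ₂ hh.isForestMap hbij)

/-! ### From a winning strategy to a bisimulation -/

namespace Play

open PObj

variable {V : Vocab} {k : ℕ} {α β γ : Type} {A : Str V α} {B : Str V β} {x y : Play k α}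

/-- The functorial action of the pebbling comonad on a function, without regard to relations. -/
def map (g : γ → α) (x : Play k γ) : Play k α := ⟨x.1.map (Prod.map id g), by simpa using x.2⟩

theorem map_snoc (g : γ → α) (l : List (Fin k × γ)) (m : Fin k × γ) :
    map g (snoc l m) = snoc (l.map (Prod.map id g)) (m.1, g m.2) :=
  Subtype.ext (by simp [map, snoc, Prod.map])

theorem value_map (g : γ → α) (x : Play k γ) : (map g x).value = g x.value := by
  obtain ⟨l, m, rfl⟩ := x.exists_eq_snoc
  rw [map_snoc, value_snoc, value_snoc]

theorem image_map_prefixes (g : γ → α) (l : List (Fin k × γ)) :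
    map g '' prefixes l = prefixes (l.map (Prod.map id g)) := by
  refine Set.Subset.antisymm (Set.image_subset_iff.2 fun x hx => hx.map _) fun y hy => ?_
  obtain ⟨l', hl', hy⟩ := List.prefix_map_iff.1 hy
  have hne : l' ≠ [] := by
    rintro rfl
    exact y.2 hy
  exact ⟨⟨l', hne⟩, hl', Subtype.ext hy.symm⟩

theorem isForestMap_map (C : Str V γ) (A : Str V α) (g : γ → α) :
    IsForestMap (FP V k C) (FP V k A) (map g) := by
  refine isForestMap_of_image_strictBelow (isCoalg C) (isCoalg A) (fun x => ?_) fun x => ?_ <;>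
    obtain ⟨l, m, rfl⟩ := exists_eq_snoc x
  · rw [map_snoc, peb_snoc, peb_snoc]
  · rw [map_snoc, strictBelow_snoc, strictBelow_snoc]
    exact image_map_prefixes g l

/-- The position of the pebbles after the moves in `l`. -/
def position (l : List (Fin k × γ)) : Fin k → Option γ :=
  l.foldl (fun ρ m => Function.update ρ m.1 (some m.2)) fun _ => none

theorem position_concat (l : List (Fin k × γ)) (m : Fin k × γ) :
    position (l ++ [m]) = Function.update (position l) m.1 (some m.2) := by
  simp [position]

theorem position_append_of_forall_ne {i : Fin k} (l : List (Fin k × γ)) {w : List (Fin k × γ)}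
    (hw : ∀ m ∈ w, m.1 ≠ i) : position (l ++ w) i = position l i := by
  induction w using List.reverseRecOn with
  | nil => rw [List.append_nil]
  | append_singleton w m ih =>
    rw [← List.append_assoc, position_concat,
      Function.update_of_ne (hw m (by simp)).symm, ih fun m' hm' => hw m' (by simp [hm'])]

theorem position_peb_of_pebbleStays (hxy : (FP V k A).le x y)
    (hstay : (FP V k A).PebbleStays x y) :
    position y.1 ((FP V k A).peb x) = some x.value := by
  obtain ⟨w, hw⟩ := hxy
  have hpos : position y.1 ((FP V k A).peb x) = position x.1 ((FP V k A).peb x) :=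
    hw ▸ position_append_of_forall_ne x.1 (pebbleStays_iff.1 hstay w hw.symm)
  obtain ⟨l, m, rfl⟩ := x.exists_eq_snoc
  rw [hpos, value_snoc, peb_snoc, snoc, position_concat, Function.update_self]

/-- A set of sequences of moves that forms a tree rooted at the empty sequence. -/
structure IsTree (W : Set (List (Fin k × γ))) : Prop where
  nil_mem : [] ∈ W
  mem_of_prefix : ∀ l ∈ W, ∀ l', l' <+: l → l' ∈ W

/-- The plays in `W` as a forest. It carries no relations: these are added by `PObj.induced`. -/
def tree (V : Vocab) (W : Set (List (Fin k × γ))) : PObj V k :=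
  (FP V k (⟨fun _ _ => False⟩ : Str V γ)).restrict {x | x.1 ∈ W}

/-- The projection of the forest of plays in `W` along a function on the elements. -/
def proj (V : Vocab) (W : Set (List (Fin k × γ))) (g : γ → α) (x : (tree V W).carrier) :
    Play k α :=
  map g x.1

variable {W : Set (List (Fin k × γ))} {g : γ → α}

theorem value_proj (x : (tree V W).carrier) : (proj V W g x).value = g (value x.1) :=
  value_map g x.1

theorem isCoalg_tree (V : Vocab) (W : Set (List (Fin k × γ))) : (tree V W).IsCoalg :=
  (isCoalg _).restrict _

theorem IsTree.isForestMap_val (V : Vocab) (hW : IsTree W) :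
    IsForestMap (tree V W) (FP V k ⟨fun _ _ => False⟩) Subtype.val :=
  (isEmb_val_restrict (isCoalg _) fun x hx y => hW.mem_of_prefix x.1 hx y.1).1.isForestMap

theorem IsTree.isForestMap_proj (hW : IsTree W) (A : Str V α) (g : γ → α) :
    IsForestMap (tree V W) (FP V k A) (proj V W g) :=
  (isForestMap_map _ A g).comp (hW.isForestMap_val V)

theorem IsTree.comparable_proj (hW : IsTree W) (A : Str V α) (g : γ → α)
    {x y : (tree V W).carrier} (hxy : (tree V W).Comparable x y) :
    (FP V k A).Comparable (proj V W g x) (proj V W g y) :=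
  (hW.isForestMap_proj A g).map_comparable (isCoalg_tree V W) (isCoalg A) hxy

theorem IsTree.pebbleStays_proj_iff (hW : IsTree W) (A : Str V α) (g : γ → α)
    {x y : (tree V W).carrier} (hxy : (tree V W).Comparable x y) :
    (FP V k A).PebbleStays (proj V W g x) (proj V W g y) ↔ (tree V W).PebbleStays x y :=
  (hW.isForestMap_proj A g).pebbleStays_map_iff (isCoalg_tree V W) (isCoalg A) hxy

theorem IsTree.exists_image_val_eq_prefixes (hW : IsTree W) {D : Set (tree V W).carrier}
    (hD : (tree V W).IsBranch D) : ∃ l ∈ W, Subtype.val '' D = prefixes l := by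
  obtain ⟨l, hl⟩ := exists_eq_prefixes
    ((hW.isForestMap_val V).isBranch_image (isCoalg_tree V W) (isCoalg _) hD)
  refine ⟨l, ?_, hl⟩
  by_cases hnil : l = []
  · exact hnil ▸ hW.nil_mem
  · obtain ⟨x, -, hx⟩ := hl.superset (show ⟨l, hnil⟩ ∈ prefixes l from List.prefix_rfl)
    have hxW : x.1.1 ∈ W := x.2
    rwa [hx] at hxW

theorem IsTree.hasStepLifting_proj (hW : IsTree W) (A : Str V α)
    (hext : ∀ l ∈ W, ∀ i a, ∃ c, g c = a ∧ l ++ [(i, c)] ∈ W) :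
    HasStepLifting (tree V W) (FP V k A) (proj V W g) := by
  intro D hD t ht
  obtain ⟨l, hl, hDl⟩ := hW.exists_image_val_eq_prefixes hD
  obtain ⟨l', ⟨i, a⟩, rfl⟩ := exists_eq_snoc t
  have hl' : l' = l.map (Prod.map id g) := by
    apply prefixes_injective
    calc prefixes l' = proj V W g '' D := (strictBelow_snoc A l' (i, a)).symm.trans ht
      _ = map g '' (Subtype.val '' D) := Set.image_comp (map g) Subtype.val D
      _ = prefixes (l.map (Prod.map id g)) :=
          (congrArg (map g '' ·) hDl).trans (image_map_prefixes g l)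
  obtain ⟨c, rfl, hc⟩ := hext l hl i a
  let z : (tree V W).carrier := ⟨snoc l (i, c), hc⟩
  refine ⟨z, Subtype.val_injective.image_injective ?_, ?_⟩
  · rw [hDl, ← strictBelow_snoc ⟨fun _ _ => False⟩ l (i, c)]
    exact (hW.isForestMap_val V).image_strictBelow (isCoalg_tree V W) (isCoalg _) z
  · rw [hl']
    exact map_snoc g l (i, c)

theorem IsTree.exists_mem_forall_position_eq {ι : Type} [Finite ι] (hW : IsTree W)
    {v : ι → (tree V W).carrier} (hcomp : ∀ i j, (tree V W).Comparable (v i) (v j))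
    (hstay : ∀ i j, (tree V W).PebbleStays (v i) (v j)) :
    ∃ l ∈ W, ∀ i, position l ((tree V W).peb (v i)) = some (value (v i).1) := by
  rcases isEmpty_or_nonempty ι with hι | hι
  · exact ⟨[], hW.nil_mem, hι.elim⟩
  obtain ⟨_, ⟨j, rfl⟩, htop⟩ := (isCoalg_tree V W).exists_mem_forall_le (Set.finite_range v)
    (Set.range_nonempty v) (by rintro _ ⟨i, rfl⟩ _ ⟨j, rfl⟩; exact hcomp i j)
  refine ⟨(v j).1.1, (v j).2, fun i => ?_⟩
  exact position_peb_of_pebbleStays (htop (v i) ⟨i, rfl⟩)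
    (((hW.isForestMap_val V).pebbleStays_map_iff (isCoalg_tree V W) (isCoalg _) (hcomp i j)).2
      (hstay i j))

/-- The relations and `I` are preserved because a related tuple of plays sits on one branch, and all
its pebbles are still in place at the top of that branch. -/
theorem IsTree.isHom_id_induced {W : Set (List (Fin k × (α × β)))} (hW : IsTree W)
    (hhom : ∀ l ∈ W, PebblesHom A B (position l)) :
    IsHom ((tree V W).induced (FP V k A) (proj V W Prod.fst))
      ((tree V W).induced (FP V k B) (proj V W Prod.snd)) id := by
  have hcoalg := isCoalg_tree V W
  have hid : IsForestMap (tree V W) (tree V W) id := ⟨id, id, fun _ => rfl⟩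
  refine ⟨?_, ?_, fun _ => hid.map_isRoot, fun _ _ => hid.map_cover, hid.map_peb⟩
  · rintro r v ⟨hcomp, hrel⟩
    obtain ⟨-, hstayA, hA⟩ := rel_iff.1 hrel
    have hstay : ∀ i j, (tree V W).PebbleStays (v i) (v j) := fun i j =>
      (hW.pebbleStays_proj_iff A Prod.fst (hcomp i j)).1 (hstayA i j)
    obtain ⟨l, hl, hpos⟩ := hW.exists_mem_forall_position_eq hcomp hstay
    refine ⟨hcomp, rel_iff.2 ⟨fun i j => hW.comparable_proj B Prod.snd (hcomp i j),
      fun i j => (hW.pebbleStays_proj_iff B Prod.snd (hcomp i j)).2 (hstay i j), ?_⟩⟩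
    simp only [value_proj, id] at hA ⊢
    exact (hhom l hl).2 r _ _ hpos hA
  · rintro (x y : (tree V W).carrier) ⟨hxy, hieq⟩
    obtain ⟨-, hstayA, hstayA', hA⟩ := ieq_iff.1 hieq
    have hstay := (hW.pebbleStays_proj_iff A Prod.fst hxy).1 hstayA
    have hstay' := (hW.pebbleStays_proj_iff A Prod.fst hxy.symm).1 hstayA'
    have hself : ∀ z, (tree V W).Comparable z z := fun z => Or.inl (hcoalg.refl z)
    obtain ⟨l, hl, hpos⟩ := hW.exists_mem_forall_position_eq (v := ![x, y])
      (Fin.forall_fin_two.2 ⟨Fin.forall_fin_two.2 ⟨hself x, hxy⟩,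
        Fin.forall_fin_two.2 ⟨hxy.symm, hself y⟩⟩)
      (Fin.forall_fin_two.2 ⟨Fin.forall_fin_two.2 ⟨hcoalg.pebbleStays_self x, hstay⟩,
        Fin.forall_fin_two.2 ⟨hstay', hcoalg.pebbleStays_self y⟩⟩)
    refine ⟨hxy, ieq_iff.2 ⟨hW.comparable_proj B Prod.snd hxy,
      (hW.pebbleStays_proj_iff B Prod.snd hxy).2 hstay,
      (hW.pebbleStays_proj_iff B Prod.snd hxy.symm).2 hstay', ?_⟩⟩
    simp only [value_proj, id] at hA ⊢
    exact (hhom l hl).1 _ _ _ _ _ _ (hpos 0) (hpos 1) hA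

theorem IsTree.posBisimP {W : Set (List (Fin k × (α × β)))} (hW : IsTree W)
    (hhom : ∀ l ∈ W, PebblesHom A B (position l))
    (hforth : ∀ l ∈ W, ∀ i a, ∃ b, l ++ [(i, (a, b))] ∈ W)
    (hback : ∀ l ∈ W, ∀ i b, ∃ a, l ++ [(i, (a, b))] ∈ W) :
    PosBisimP V k (FP V k A) (FP V k B) := by
  have hcoalg := isCoalg_tree V W
  have hfst := hW.isForestMap_proj A Prod.fst
  have hsnd := hW.isForestMap_proj B Prod.snd
  have hfststep := hW.hasStepLifting_proj (g := Prod.fst) A fun l hl i a =>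
    (hforth l hl i a).imp' (Prod.mk a) fun _ hmem => ⟨rfl, hmem⟩
  have hsndstep := hW.hasStepLifting_proj (g := Prod.snd) B fun l hl i b =>
    (hback l hl i b).imp' (Prod.mk · b) fun _ hmem => ⟨rfl, hmem⟩
  have hp := hfst.isPWEmb_induced hcoalg (isCoalg A)
  have hq := hsnd.isPWEmb_induced hcoalg (isCoalg B)
  have hZ₁ := hfst.isCoalg_induced hcoalg (isCoalg A)
  have hZ₂ := hsnd.isCoalg_induced hcoalg (isCoalg B)
  exact ⟨_, _, hZ₁, hZ₂, _, id, _, hp, HasStepLifting.isOpen hZ₁ (isCoalg A) hp hfststep.induced,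
    hW.isHom_id_induced hhom, Function.bijective_id,
    hq, HasStepLifting.isOpen hZ₂ (isCoalg B) hq hsndstep.induced⟩

/-- The sequences of moves all of whose positions lie in a given set of positions. -/
def playsIn (S : (Fin k → Option γ) → Prop) : Set (List (Fin k × γ)) :=
  {l | ∀ l', l' <+: l → S (position l')}

variable {S : (Fin k → Option γ) → Prop} {l : List (Fin k × γ)}

theorem isTree_playsIn (hnone : S fun _ => none) : IsTree (playsIn S) where
  nil_mem _ hl := List.prefix_nil.1 hl ▸ hnone
  mem_of_prefix _ hl _ hle _ hle' := hl _ (hle'.trans hle)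

theorem position_of_mem_playsIn (hl : l ∈ playsIn S) : S (position l) := hl l List.prefix_rfl

theorem concat_mem_playsIn (hl : l ∈ playsIn S) {i : Fin k} {c : γ}
    (hS : S (Function.update (position l) i (some c))) : l ++ [(i, c)] ∈ playsIn S := by
  intro l' hl'
  rcases List.prefix_concat_iff.1 hl' with rfl | hl'
  · rwa [position_concat]
  · exact hl l' hl'

end Play

theorem PPebWin.posBisimP {V : Vocab} {k : ℕ} {α β : Type} {A : Str V α} {B : Str V β}
    (hwin : PPebWin V A B k) : PosBisimP V k (FP V k A) (FP V k B) := by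
  obtain ⟨S, hnone, hS⟩ := hwin
  refine (Play.isTree_playsIn hnone).posBisimP
    (fun l hl => (hS _ (Play.position_of_mem_playsIn hl)).1) (fun l hl i a => ?_) fun l hl i b => ?_
  · obtain ⟨b, hb⟩ := (hS _ (Play.position_of_mem_playsIn hl)).2.1 i a
    exact ⟨b, Play.concat_mem_playsIn hl hb⟩
  · obtain ⟨a, ha⟩ := (hS _ (Play.position_of_mem_playsIn hl)).2.2 i b
    exact ⟨a, Play.concat_mem_playsIn hl ha⟩

theorem positive_bisimulation_iff_positive_pebble_game_general
    (V : Vocab) {α β : Type} (A : Str V α) (B : Str V β) (k : ℕ) :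
    PosBisimP V k (FP V k A) (FP V k B) ↔ PPebWin V A B k :=
  ⟨PosBisimP.pPebWin, PPebWin.posBisimP⟩

/-- there exists a positive bisimulation from `F_k^I(A)` to `F_k^I(B)` in
`EM(P_k^I)` if, and only if, Duplicator has a winning strategy in the positive
`k`-pebble game from `A` to `B`. -/
theorem positive_bisimulation_iff_positive_pebble_game
    (V : Vocab) [Finite V.Rel] (har : ∀ r : V.Rel, V.ar r ≠ 0)
    {α β : Type} (A : Str V α) (B : Str V β) (k : ℕ) (hk : 0 < k) :
    PosBisimP V k (FP V k A) (FP V k B) ↔ PPebWin V A B k :=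
  positive_bisimulation_iff_positive_pebble_game_general V A B k
end
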